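/- arXiv:1312.7547 — 4 statements merged into one kernel-verified Lean document; each statement's English description precedes it below -/
import Mathlib

section
/- For every triple of matrices E, A ∈ ℝ^{c×n}, B ∈ ℝ^{c×m}, there exists an ODE-LTI (A_l, B_l, C_l, D_l) associated with the DAE d(Ex)/dt = Ax + Bu, and its state dimension n̂ satisfies n̂ ≤ rank E. -/
open MeasureTheory Set Filter Matrix

open Classical in
noncomputable def pinv {α β : Type} [Fintype α] [Fintype β] [DecidableEq α] [DecidableEq β]
    (M : Matrix α β ℝ) : Matrix β α ℝ :=
  if h : ∃ X : Matrix β α ℝ,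
      M * X * M = M ∧ X * M * X = X ∧ (M * X)ᵀ = M * X ∧ (X * M)ᵀ = X * M
  then h.choose else 0

def IsNiceInterval (I : Set ℝ) : Prop :=
  (∃ a b, I = Set.Icc a b) ∨ (∃ a, I = Set.Ici a) ∨ (∃ a, I = Set.Iic a) ∨ I = Set.univ

def IsDAESolution {c n m : ℕ} (E A : Matrix (Fin c) (Fin n) ℝ)
    (B : Matrix (Fin c) (Fin m) ℝ) (I : Set ℝ)
    (x : ℝ → Fin n → ℝ) (u : ℝ → Fin m → ℝ) : Prop :=
  LocallyIntegrableOn x I ∧ LocallyIntegrableOn u I ∧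
  ∀ t₀ ∈ I, ∀ t ∈ I, t₀ ≤ t →
    E.mulVec (x t) = E.mulVec (x t₀) + ∫ s in t₀..t, (A.mulVec (x s) + B.mulVec (u s))

def IsStateTraj {r : ℕ} {σ : Type} [Fintype σ] (Al : Matrix (Fin r) (Fin r) ℝ)
    (Bl : Matrix (Fin r) σ ℝ)
    (I : Set ℝ) (p : ℝ → Fin r → ℝ) (g : ℝ → σ → ℝ) : Prop :=
  LocallyIntegrableOn p I ∧ LocallyIntegrableOn g I ∧
  ∀ t₀ ∈ I, ∀ t ∈ I, t₀ ≤ t →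
    p t = p t₀ + ∫ τ in t₀..t, (Al.mulVec (p τ) + Bl.mulVec (g τ))

def RealizesOn {c n m nh k : ℕ} (E A : Matrix (Fin c) (Fin n) ℝ) (B : Matrix (Fin c) (Fin m) ℝ)
    (Al : Matrix (Fin nh) (Fin nh) ℝ) (Bl : Matrix (Fin nh) (Fin k) ℝ)
    (Cl : Matrix (Fin n ⊕ Fin m) (Fin nh) ℝ) (Dl : Matrix (Fin n ⊕ Fin m) (Fin k) ℝ)
    (I : Set ℝ) : Prop :=
  (∀ x u, IsDAESolution E A B I x u →
    ∃ p g, IsStateTraj Al Bl I p g ∧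
      ∀ᵐ t ∂(volume.restrict I), Sum.elim (x t) (u t) = Cl.mulVec (p t) + Dl.mulVec (g t)) ∧
  (∀ p g, IsStateTraj Al Bl I p g →
    ∃ x u, IsDAESolution E A B I x u ∧
      ∀ᵐ t ∂(volume.restrict I), Sum.elim (x t) (u t) = Cl.mulVec (p t) + Dl.mulVec (g t))

def firstRows {n m nh : ℕ} (Cl : Matrix (Fin n ⊕ Fin m) (Fin nh) ℝ) :
    Matrix (Fin n) (Fin nh) ℝ :=
  Matrix.of fun i j => Cl (Sum.inl i) j

def IsAssociated {c n m nh k : ℕ} (E A : Matrix (Fin c) (Fin n) ℝ)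
    (B : Matrix (Fin c) (Fin m) ℝ)
    (Al : Matrix (Fin nh) (Fin nh) ℝ) (Bl : Matrix (Fin nh) (Fin k) ℝ)
    (Cl : Matrix (Fin n ⊕ Fin m) (Fin nh) ℝ) (Dl : Matrix (Fin n ⊕ Fin m) (Fin k) ℝ) : Prop :=
  nh ≤ n ∧
  ((Dl = 0 ∧ Bl = 0 ∧ k = 1) ∨ Dl.rank = k) ∧
  E * firstRows Dl = 0 ∧ (E * firstRows Cl).rank = nh ∧
  ∀ I : Set ℝ, IsNiceInterval I → RealizesOn E A B Al Bl Cl Dl I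

def ConsistencySet {c n m : ℕ} (E A : Matrix (Fin c) (Fin n) ℝ)
    (B : Matrix (Fin c) (Fin m) ℝ) : Set (Fin c → ℝ) :=
  {z | ∃ I : Set ℝ, IsNiceInterval I ∧ (0 : ℝ) ∈ I ∧
    ∃ x u, IsDAESolution E A B I x u ∧ E.mulVec (x 0) = z}

section Helpers

theorem aux_alg {c : ℕ} {W : Type} [AddCommGroup W] [Module ℝ W] [FiniteDimensional ℝ W]
    (e a : W →ₗ[ℝ] (Fin c → ℝ)) :
    ∃ (nh k : ℕ) (ι : (Fin nh → ℝ) →ₗ[ℝ] (Fin c → ℝ)) (L : (Fin c → ℝ) →ₗ[ℝ] (Fin nh → ℝ))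
      (C : (Fin nh → ℝ) →ₗ[ℝ] W) (D : (Fin k → ℝ) →ₗ[ℝ] W) (G : W →ₗ[ℝ] (Fin k → ℝ))
      (Al : (Fin nh → ℝ) →ₗ[ℝ] (Fin nh → ℝ)) (Bl : (Fin k → ℝ) →ₗ[ℝ] (Fin nh → ℝ)),
      (∀ p, L (ι p) = p) ∧ (∀ p, e (C p) = ι p) ∧ (∀ g, e (D g) = 0) ∧ (∀ g, G (D g) = g) ∧
      (∀ p, a (C p) = ι (Al p)) ∧ (∀ g, a (D g) = ι (Bl g)) ∧
      (∀ Z : Submodule ℝ (Fin c → ℝ), Z ≤ (Z.comap a).map e → Z ≤ LinearMap.range ι) ∧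
      (∀ w, e w ∈ LinearMap.range ι → a w ∈ LinearMap.range ι →
        w = C (L (e w)) + D (G (w - C (L (e w))))) := by
  set Zs : Submodule ℝ (Fin c → ℝ) := sSup {Z | Z ≤ (Z.comap a).map e} with hZs
  have hfix : Zs ≤ (Zs.comap a).map e := by
    refine sSup_le fun Z hZ => le_trans hZ ?_
    exact Submodule.map_mono (Submodule.comap_mono (le_sSup hZ))
  set K : Submodule ℝ W := LinearMap.ker e ⊓ Zs.comap a with hK
  let b := (Module.finBasis ℝ Zs).equivFun
  let d := (Module.finBasis ℝ K).equivFun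
  let ι := Zs.subtype ∘ₗ b.symm.toLinearMap
  let D := K.subtype ∘ₗ d.symm.toLinearMap
  have hιinj : Function.Injective ι := Zs.injective_subtype.comp b.symm.injective
  have hDinj : Function.Injective D := K.injective_subtype.comp d.symm.injective
  have hrange : LinearMap.range ι = Zs := by
    simp only [ι, LinearMap.range_comp, LinearEquiv.range, Submodule.map_top,
      Submodule.range_subtype]
  obtain ⟨L, hL⟩ := ι.exists_leftInverse_of_injective (LinearMap.ker_eq_bot.2 hιinj)
  obtain ⟨G, hG⟩ := D.exists_leftInverse_of_injective (LinearMap.ker_eq_bot.2 hDinj)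
  have hL' : ∀ p, L (ι p) = p := fun p => LinearMap.congr_fun hL p
  have hG' : ∀ p, G (D p) = p := fun p => LinearMap.congr_fun hG p
  have hιmem : ∀ p, ι p ∈ Zs := fun p => (b.symm p).2
  have hιL : ∀ z ∈ Zs, ι (L z) = z := by
    intro z hz
    rw [← hrange] at hz
    obtain ⟨p, rfl⟩ := hz
    rw [hL']
  have hch : ∀ i, ∃ w, a w ∈ Zs ∧ e w = ι (Pi.basisFun ℝ _ i) := by
    intro i
    obtain ⟨w, hw, hw'⟩ := hfix (hιmem (Pi.basisFun ℝ _ i))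
    exact ⟨w, hw, hw'⟩
  choose ws hws1 hws2 using hch
  let C := (Pi.basisFun ℝ _).constr ℝ ws
  have heC : e ∘ₗ C = ι := by
    refine (Pi.basisFun ℝ _).ext fun i => ?_
    rw [LinearMap.comp_apply, Module.Basis.constr_basis, hws2]
  have haC : ∀ p, a (C p) ∈ Zs := by
    intro p
    have : C p ∈ Zs.comap a := by
      simp only [C, Module.Basis.constr_apply_fintype]
      exact Submodule.sum_mem _ fun i _ => Submodule.smul_mem _ _ (hws1 i)
    exact this
  have heC' : ∀ p, e (C p) = ι p := fun p => LinearMap.congr_fun heC p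
  have hDmem : ∀ g, D g ∈ K := fun g => (d.symm g).2
  refine ⟨_, _, ι, L, C, D, G, L ∘ₗ a ∘ₗ C, L ∘ₗ a ∘ₗ D, hL', heC',
    fun g => (hDmem g).1, hG', fun p => ?_, fun g => ?_, fun Z hZ => ?_, fun w h1 h2 => ?_⟩
  · exact (hιL _ (haC p)).symm
  · exact (hιL _ (hDmem g).2).symm
  · rw [hrange]; exact le_sSup hZ
  · rw [hrange] at h1 h2
    have hk : w - C (L (e w)) ∈ K := by
      refine ⟨?_, ?_⟩
      · change e _ = 0
        rw [map_sub, heC', hιL _ h1, sub_self]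
      · change a _ ∈ Zs
        rw [map_sub]; exact Zs.sub_mem h2 (haC _)
    have : D (G (w - C (L (e w)))) = w - C (L (e w)) := by
      have h3 : D (d ⟨_, hk⟩) = w - C (L (e w)) := by simp [D]
      rw [← h3, hG']
    rw [this]; abel

theorem aux_zero {F : Type} [NormedAddCommGroup F] [NormedSpace ℝ F] [CompleteSpace F]
    {I : Set ℝ} (hc : IsClosed I) (ho : I.OrdConnected) {f : ℝ → F}
    (hf : LocallyIntegrableOn f I)
    (h : ∀ t₀ ∈ I, ∀ t ∈ I, t₀ ≤ t → ∫ s in t₀..t, f s = 0) :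
    ∀ᵐ t ∂(volume.restrict I), f t = 0 := by
  have hg : LocallyIntegrable (I.indicator f) := by
    rw [locallyIntegrable_iff]
    intro k hk
    rw [integrableOn_indicator_iff hc.measurableSet]
    exact hf.integrableOn_compact_subset inter_subset_left (hk.inter_left hc)
  have h' : ∀ t₀ ∈ I, ∀ t ∈ I, ∫ s in t₀..t, I.indicator f s = 0 := by
    intro t₀ h0 t ht
    have : ∫ s in t₀..t, I.indicator f s = ∫ s in t₀..t, f s := by
      refine intervalIntegral.integral_congr fun s hs => ?_
      exact indicator_of_mem (ho.uIcc_subset h0 ht hs) _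
    rw [this]
    rcases le_total t₀ t with hle | hle
    · exact h _ h0 _ ht hle
    · rw [intervalIntegral.integral_symm, h _ ht _ h0 hle, neg_zero]
  have hfr : volume (frontier I) = 0 := ho.convex.addHaar_frontier volume
  have hfr' : ∀ᵐ x, x ∉ frontier I := measure_eq_zero_iff_ae_notMem.1 hfr
  rw [ae_restrict_iff' hc.measurableSet]
  filter_upwards [LocallyIntegrable.ae_hasDerivAt_integral hg, hfr'] with x hx hxf hxI
  have hxi : x ∈ interior I := by
    by_contra hn
    exact hxf ⟨subset_closure hxI, hn⟩
  have h1 := hx x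
  rw [indicator_of_mem hxI] at h1
  have h2 : HasDerivAt (fun y => ∫ t in x..y, I.indicator f t) 0 x := by
    refine (hasDerivAt_const x (0 : F)).congr_of_eventuallyEq ?_
    filter_upwards [mem_interior_iff_mem_nhds.1 hxi] with y hy
    exact h' x hxI y hy
  exact h1.unique h2

theorem aux_loc {V W : Type} [NormedAddCommGroup V] [NormedSpace ℝ V] [FiniteDimensional ℝ V]
    [NormedAddCommGroup W] [NormedSpace ℝ W] {I : Set ℝ} {f : ℝ → V}
    (hf : LocallyIntegrableOn f I) (l : V →ₗ[ℝ] W) : LocallyIntegrableOn (fun t => l (f t)) I :=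
  l.toContinuousLinearMap.locallyIntegrableOn_comp hf

theorem aux_ii {V : Type} [NormedAddCommGroup V] {I : Set ℝ} (ho : I.OrdConnected) {f : ℝ → V}
    (hf : LocallyIntegrableOn f I) {s t : ℝ} (hs : s ∈ I) (ht : t ∈ I) :
    IntervalIntegrable f volume s t :=
  (hf.integrableOn_compact_subset (ho.uIcc_subset hs ht) isCompact_uIcc).intervalIntegrable

theorem aux_int {V W : Type} [NormedAddCommGroup V] [NormedSpace ℝ V] [FiniteDimensional ℝ V]
    [NormedAddCommGroup W] [NormedSpace ℝ W] [CompleteSpace W] {I : Set ℝ} (ho : I.OrdConnected)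
    {f : ℝ → V}
    (hf : LocallyIntegrableOn f I) (l : V →ₗ[ℝ] W) {s t : ℝ} (hs : s ∈ I) (ht : t ∈ I) :
    ∫ τ in s..t, l (f τ) = l (∫ τ in s..t, f τ) := by
  have : CompleteSpace V := FiniteDimensional.complete ℝ V
  exact l.toContinuousLinearMap.intervalIntegral_comp_comm (aux_ii ho hf hs ht)

theorem aux_ker {c : ℕ} (Z : Submodule ℝ (Fin c → ℝ)) :
    ∃ (r : ℕ) (l : (Fin c → ℝ) →ₗ[ℝ] (Fin r → ℝ)), ∀ z, l z = 0 ↔ z ∈ Z := by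
  refine ⟨_, (Module.finBasis ℝ ((Fin c → ℝ) ⧸ Z)).equivFun.toLinearMap ∘ₗ Z.mkQ, fun z => ?_⟩
  simp only [LinearMap.comp_apply, LinearEquiv.coe_coe, LinearEquiv.map_eq_zero_iff,
    Submodule.mkQ_apply, Submodule.Quotient.mk_eq_zero]

theorem aux_core {c : ℕ} {W : Type} [NormedAddCommGroup W] [NormedSpace ℝ W]
    [FiniteDimensional ℝ W] (e a : W →ₗ[ℝ] (Fin c → ℝ)) {I : Set ℝ} (hc : IsClosed I)
    (ho : I.OrdConnected) (hnt : I.Nontrivial) {w : ℝ → W} (hw : LocallyIntegrableOn w I)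
    (h : ∀ t₀ ∈ I, ∀ t ∈ I, t₀ ≤ t → e (w t) = e (w t₀) + ∫ s in t₀..t, a (w s)) :
    ∃ Z : Submodule ℝ (Fin c → ℝ), Z ≤ (Z.comap a).map e ∧ (∀ t ∈ I, e (w t) ∈ Z) ∧
      ∀ᵐ t ∂(volume.restrict I), a (w t) ∈ Z := by
  have haw := aux_loc hw a
  set Z : Submodule ℝ (Fin c → ℝ) := Submodule.span ℝ ((fun t => e (w t)) '' I) with hZ
  have h1 : ∀ t ∈ I, e (w t) ∈ Z := fun t ht => Submodule.subset_span ⟨t, ht, rfl⟩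
  have h2 : ∀ᵐ t ∂(volume.restrict I), a (w t) ∈ Z := by
    obtain ⟨r, l, hl⟩ := aux_ker Z
    have := aux_zero hc ho (aux_loc haw l) (by
      intro t₀ h0 t ht hle
      rw [aux_int ho haw l h0 ht, hl]
      have := h t₀ h0 t ht hle
      rw [← sub_eq_iff_eq_add'] at this
      rw [← this]
      exact Z.sub_mem (h1 t ht) (h1 t₀ h0))
    filter_upwards [this] with t ht
    exact (hl _).1 ht
  refine ⟨Z, ?_, h1, h2⟩
  obtain ⟨r, l, hl⟩ := aux_ker ((Z.comap a).map e)
  refine Submodule.span_le.2 ?_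
  rintro _ ⟨t, ht, rfl⟩
  obtain ⟨s, hs, hst⟩ := hnt.exists_ne t
  change e (w t) ∈ (Z.comap a).map e
  rw [← hl]
  obtain ⟨p, q, hp, hq, hpq, htpq⟩ : ∃ p q, p ∈ I ∧ q ∈ I ∧ p < q ∧ t ∈ Icc p q := by
    rcases lt_or_gt_of_ne hst with hlt | hlt
    · exact ⟨s, t, hs, ht, hlt, hlt.le, le_rfl⟩
    · exact ⟨t, s, ht, hs, hlt, le_rfl, hlt.le⟩
  have hsub : Icc p q ⊆ I := ho.out hp hq
  have hcont : ContinuousOn (fun t => e (w t)) (Icc p q) := by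
    have h3 : ContinuousOn (fun t => e (w p) + ∫ s in p..t, a (w s)) (Icc p q) := by
      refine continuousOn_const.add ?_
      have := intervalIntegral.continuousOn_primitive_interval
        (f := fun s => a (w s)) (a := p) (b := q) (μ := volume)
        (haw.integrableOn_compact_subset (ho.uIcc_subset hp hq) isCompact_uIcc)
      rwa [uIcc_of_le hpq.le] at this
    exact h3.congr fun y hy => h p hp y (hsub hy) hy.1
  have hcont' : ContinuousOn (fun t => l (e (w t))) (Icc p q) :=
    l.toContinuousLinearMap.continuous.comp_continuousOn hcont
  have hae : (fun t => l (e (w t))) =ᵐ[volume.restrict (Icc p q)] fun _ => 0 := by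
    filter_upwards [ae_restrict_of_ae_restrict_of_subset hsub h2] with y hy
    exact (hl _).2 ⟨w y, hy, rfl⟩
  exact Measure.eqOn_Icc_of_ae_eq volume hpq.ne hae hcont' continuousOn_const htpq

theorem aux_nice {I : Set ℝ} (h : IsNiceInterval I) : IsClosed I ∧ I.OrdConnected := by
  rcases h with ⟨a, b, rfl⟩ | ⟨a, rfl⟩ | ⟨a, rfl⟩ | rfl
  · exact ⟨isClosed_Icc, ordConnected_Icc⟩
  · exact ⟨isClosed_Ici, ordConnected_Ici⟩
  · exact ⟨isClosed_Iic, ordConnected_Iic⟩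
  · exact ⟨isClosed_univ, ordConnected_univ⟩

theorem aux_firstRows {c n m k : ℕ} (E : Matrix (Fin c) (Fin n) ℝ)
    (M : Matrix (Fin n ⊕ Fin m) (Fin k) ℝ) (v : Fin k → ℝ) :
    (E * firstRows M).mulVec v = E.mulVec (fun i => (M.mulVec v) (Sum.inl i)) := by
  rw [← Matrix.mulVec_mulVec]
  rfl

theorem aux_rank {α : Type} [Fintype α] {k : ℕ} (M : Matrix α (Fin k) ℝ)
    (h : ∀ v, M.mulVec v = 0 → v = 0) : M.rank = k := by
  have : Function.Injective M.mulVecLin := by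
    rw [← LinearMap.ker_eq_bot, LinearMap.ker_eq_bot']
    exact h
  rw [Matrix.rank, LinearMap.finrank_range_of_inj this]
  simp

end Helpers

/-- Theorem (Existence): every DAE-LTI admits an associated ODE-LTI, whose state
dimension is at most `rank E`. -/
theorem exists_associated_ode_lti {c n m : ℕ}
    (E A : Matrix (Fin c) (Fin n) ℝ) (B : Matrix (Fin c) (Fin m) ℝ) :
    ∃ (nh k : ℕ) (Al : Matrix (Fin nh) (Fin nh) ℝ) (Bl : Matrix (Fin nh) (Fin k) ℝ)
      (Cl : Matrix (Fin n ⊕ Fin m) (Fin nh) ℝ) (Dl : Matrix (Fin n ⊕ Fin m) (Fin k) ℝ),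
      IsAssociated E A B Al Bl Cl Dl ∧ nh ≤ E.rank := by
  let px : (Fin n ⊕ Fin m → ℝ) →ₗ[ℝ] (Fin n → ℝ) := LinearMap.funLeft ℝ ℝ Sum.inl
  let pu : (Fin n ⊕ Fin m → ℝ) →ₗ[ℝ] (Fin m → ℝ) := LinearMap.funLeft ℝ ℝ Sum.inr
  let ix : (Fin n → ℝ) →ₗ[ℝ] (Fin n ⊕ Fin m → ℝ) := (LinearEquiv.sumArrowLequivProdArrow _ _ ℝ ℝ).symm.toLinearMap ∘ₗ LinearMap.inl ℝ _ _
  let iu : (Fin m → ℝ) →ₗ[ℝ] (Fin n ⊕ Fin m → ℝ) := (LinearEquiv.sumArrowLequivProdArrow _ _ ℝ ℝ).symm.toLinearMap ∘ₗ LinearMap.inr ℝ _ _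
  have hix : ∀ x u, ix x + iu u = Sum.elim x u := by
    intro x u
    funext i
    rcases i with i | i <;>
    simp [ix, iu]
  let e : (Fin n ⊕ Fin m → ℝ) →ₗ[ℝ] (Fin c → ℝ) := E.mulVecLin ∘ₗ px
  let a : (Fin n ⊕ Fin m → ℝ) →ₗ[ℝ] (Fin c → ℝ) := A.mulVecLin ∘ₗ px + B.mulVecLin ∘ₗ pu
  have he : ∀ w, e w = E.mulVec (px w) := fun _ => rfl
  have ha : ∀ w, a w = A.mulVec (px w) + B.mulVec (pu w) := fun _ => rfl
  have helim : ∀ w : Fin n ⊕ Fin m → ℝ, Sum.elim (px w) (pu w) = w := fun w => Sum.elim_comp_inl_inr w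
  obtain ⟨nh, k, ι, L, C, D, G, Al, Bl, hL, heC, heD, hG, haC, haD, hmax, hrep⟩ := aux_alg e a
  have hrankC : (E * firstRows (LinearMap.toMatrix' C)).rank = nh := by
    apply aux_rank
    intro v hv
    rw [aux_firstRows, LinearMap.toMatrix'_mulVec] at hv
    have h1 : e (C v) = 0 := hv
    rw [heC] at h1
    rw [← hL v, h1, map_zero]
  have hle : nh ≤ E.rank := by
    conv_lhs => rw [← hrankC]
    exact Matrix.rank_mul_le_left _ _
  refine ⟨nh, k, LinearMap.toMatrix' Al, LinearMap.toMatrix' Bl, LinearMap.toMatrix' C,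
    LinearMap.toMatrix' D, ⟨?_, Or.inr ?_, ?_, hrankC, fun I hI => ?_⟩, hle⟩
  · exact hle.trans E.rank_le_width
  · apply aux_rank
    intro v hv
    rw [LinearMap.toMatrix'_mulVec] at hv
    rw [← hG v, hv, map_zero]
  · apply Matrix.mulVec_injective
    funext v
    rw [aux_firstRows, LinearMap.toMatrix'_mulVec, Matrix.zero_mulVec]
    exact heD v
  obtain ⟨hc, ho⟩ := aux_nice hI
  unfold RealizesOn IsStateTraj IsDAESolution
  simp only [LinearMap.toMatrix'_mulVec]
  constructor
  · rintro x u ⟨hx, hu, hsol⟩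
    rcases I.subsingleton_or_nontrivial with hsub | hnt
    · refine ⟨fun _ => 0, fun _ => 0, ⟨locallyIntegrableOn_zero, locallyIntegrableOn_zero, ?_⟩, ?_⟩
      · intro t₀ _ t _ _
        simp
      · rw [Measure.restrict_zero_set (hsub.measure_zero volume)]
        simp
    · let w : ℝ → (Fin n ⊕ Fin m → ℝ) := fun t => Sum.elim (x t) (u t)
      have hw : LocallyIntegrableOn w I := by
        have := (aux_loc hx ix).add (aux_loc hu iu)
        have h5 : w = (fun t => ix (x t)) + fun t => iu (u t) := by
          funext t
          exact (hix _ _).symm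
        rw [h5]
        exact this
      have hwsol : ∀ t₀ ∈ I, ∀ t ∈ I, t₀ ≤ t → e (w t) = e (w t₀) + ∫ s in t₀..t, a (w s) := hsol
      obtain ⟨Z, hZ, hZe, hZa⟩ := aux_core e a hc ho hnt hw hwsol
      have hZle := hmax Z hZ
      have hrepw : ∀ᵐ t ∂(volume.restrict I),
          t ∈ I ∧ w t = C (L (e (w t))) + D (G (w t - C (L (e (w t))))) := by
        filter_upwards [hZa, ae_restrict_mem hc.measurableSet] with t h1 ht
        exact ⟨ht, hrep _ (hZle (hZe t ht)) (hZle h1)⟩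
      refine ⟨fun t => L (e (w t)), fun t => G (w t - C (L (e (w t)))), ⟨?_, ?_, ?_⟩, ?_⟩
      · exact aux_loc hw (L ∘ₗ e)
      · exact aux_loc hw (G ∘ₗ (LinearMap.id - C ∘ₗ L ∘ₗ e))
      · intro t₀ h0 t ht hle'
        change L (e (w t)) = L (e (w t₀)) + _
        rw [hwsol t₀ h0 t ht hle', map_add, ← aux_int ho (aux_loc hw a) L h0 ht]
        congr 1
        refine intervalIntegral.integral_congr_ae ?_
        rw [ae_restrict_iff' hc.measurableSet] at hrepw
        filter_upwards [hrepw] with s hs hs'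
        have hsI : s ∈ I := ho.uIcc_subset h0 ht (uIoc_subset_uIcc hs')
        have h3 := congrArg a (hs hsI).2
        rw [map_add, haC, haD, ← map_add] at h3
        rw [h3, hL]
      · filter_upwards [hrepw] with t ht
        exact ht.2
  · rintro p g ⟨hp, hg, hsol⟩
    have hw : LocallyIntegrableOn (fun t => C (p t) + D (g t)) I :=
      (aux_loc hp C).add (aux_loc hg D)
    refine ⟨fun t => px (C (p t) + D (g t)), fun t => pu (C (p t) + D (g t)), ⟨aux_loc hw px, aux_loc hw pu, ?_⟩, ?_⟩
    · intro t₀ h0 t ht hle'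
      simp only [← he, ← ha]
      have h1 : ∀ s, a (C (p s) + D (g s)) = ι (Al (p s) + Bl (g s)) := by
        intro s
        rw [map_add, haC, haD, map_add]
      simp only [h1]
      have hloc : LocallyIntegrableOn (fun s => Al (p s) + Bl (g s)) I :=
        (aux_loc hp Al).add (aux_loc hg Bl)
      rw [aux_int ho hloc ι h0 ht, map_add, map_add, heC, heC, heD, heD, add_zero, add_zero,
        ← map_add, ← hsol t₀ h0 t ht hle']
    · exact Filter.Eventually.of_forall fun t => helim _
end

section
/- If (A,B,C,D) is a minimal ODE-LTI realization of the behavior B_ℝ(E,A,B) such that the stacked matrix [B; D] is either of full column rank or zero with a single column, then (A,B,C,D) is an ODE-LTI associated with the DAE d(Ex)/dt = Ax + Bu. -/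
open MeasureTheory Set Filter Matrix

namespace MinReal

structure GoodI (I : Set ℝ) : Prop where
  closed : IsClosed I
  ord : I.OrdConnected
  dense : I ⊆ closure (interior I)

def Prim {V : Type*} [NormedAddCommGroup V] [NormedSpace ℝ V] (I : Set ℝ)
    (φ h : ℝ → V) : Prop :=
  ∀ t₀ ∈ I, ∀ t ∈ I, t₀ ≤ t → φ t = φ t₀ + ∫ s in t₀..t, h s

set_option linter.unusedSectionVars false

section analysis
variable {V : Type*} [NormedAddCommGroup V] [NormedSpace ℝ V]
  {V' : Type*} [NormedAddCommGroup V'] [NormedSpace ℝ V']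

lemma goodI_univ : GoodI (univ : Set ℝ) := ⟨isClosed_univ, ordConnected_univ, by simp⟩

lemma locInt_indicator {I : Set ℝ} (hI : GoodI I) {h : ℝ → V} (hh : LocallyIntegrableOn h I) :
    LocallyIntegrable (I.indicator h) := by
  rw [locallyIntegrable_iff]
  intro K hK
  rw [integrableOn_indicator_iff hI.closed.measurableSet]
  exact hh.integrableOn_compact_subset inter_subset_left (hK.inter_left hI.closed)

lemma intervalIntegrable_of_mem {I : Set ℝ} (hI : I.OrdConnected) {h : ℝ → V}
    (hh : LocallyIntegrableOn h I) {a b : ℝ} (ha : a ∈ I) (hb : b ∈ I) :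
    IntervalIntegrable h volume a b := by
  have := hh.integrableOn_compact_subset (hI.uIcc_subset ha hb) isCompact_uIcc
  exact this.intervalIntegrable

lemma integral_indicator_of_mem {I : Set ℝ} (hI : I.OrdConnected) (h : ℝ → V)
    {a b : ℝ} (ha : a ∈ I) (hb : b ∈ I) :
    ∫ s in a..b, I.indicator h s = ∫ s in a..b, h s := by
  apply intervalIntegral.integral_congr
  intro s hs
  exact indicator_of_mem (hI.uIcc_subset ha hb hs) h

lemma Prim.continuousOn {I : Set ℝ} (hI : GoodI I) {φ h : ℝ → V}
    (hh : LocallyIntegrableOn h I) (hp : Prim I φ h) : ContinuousOn φ I := by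
  rcases I.eq_empty_or_nonempty with rfl | ⟨c, hc⟩
  · exact continuousOn_empty _
  have hl := locInt_indicator hI hh
  have hc1 : Continuous fun t => ∫ s in c..t, I.indicator h s :=
    intervalIntegral.continuous_primitive
      (fun a b => (hl.integrableOn_isCompact isCompact_uIcc).intervalIntegrable) c
  refine ((continuous_const (y := φ c)).add hc1).continuousOn.congr ?_
  intro t ht
  simp only [Pi.add_apply]
  rw [integral_indicator_of_mem hI.ord h hc ht]
  rcases le_total c t with hct | hct
  · exact hp c hc t ht hct
  · rw [intervalIntegral.integral_symm, hp t ht c hc hct]; abel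

lemma ae_zero_of_integral_zero [CompleteSpace V] {I : Set ℝ} (hI : GoodI I) {h : ℝ → V}
    (hh : LocallyIntegrableOn h I)
    (hz : ∀ t₀ ∈ I, ∀ t ∈ I, t₀ ≤ t → ∫ s in t₀..t, h s = 0) :
    ∀ᵐ t ∂(volume.restrict I), h t = 0 := by
  have hl := locInt_indicator hI hh
  have hz' : ∀ t₀ ∈ I, ∀ t ∈ I, ∫ s in t₀..t, h s = 0 := by
    intro t₀ h0 t ht
    rcases le_total t₀ t with hct | hct
    · exact hz _ h0 _ ht hct
    · rw [intervalIntegral.integral_symm, hz _ ht _ h0 hct, neg_zero]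
  have hfr : ∀ᵐ t : ℝ, t ∉ frontier I := by
    rw [ae_iff]; simpa using (Set.OrdConnected.convex (𝕜 := ℝ) hI.ord).addHaar_frontier volume
  rw [ae_restrict_iff' hI.closed.measurableSet]
  filter_upwards [_root_.LocallyIntegrable.ae_hasDerivAt_integral hl, hfr] with t hd hf ht
  have hti : t ∈ interior I := by
    by_contra hn
    exact hf ⟨subset_closure ht, hn⟩
  have h1 := hd t
  have h2 : HasDerivAt (fun x => ∫ s in t..x, I.indicator h s) 0 t := by
    refine (hasDerivAt_const t (0 : V)).congr_of_eventuallyEq ?_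
    filter_upwards [mem_interior_iff_mem_nhds.mp hti] with x hx
    rw [integral_indicator_of_mem hI.ord h ht hx, hz' t ht x hx]
  have := h1.unique h2
  rwa [indicator_of_mem ht] at this

lemma locInt_map [FiniteDimensional ℝ V] (L : V →ₗ[ℝ] V') {I : Set ℝ} {h : ℝ → V}
    (hh : LocallyIntegrableOn h I) : LocallyIntegrableOn (fun t => L (h t)) I := by
  intro x hx
  exact (hh x hx).elim fun s hs =>
    ⟨s, hs.1, (LinearMap.toContinuousLinearMap L).integrable_comp hs.2⟩

lemma Prim.map [FiniteDimensional ℝ V] [CompleteSpace V'] (L : V →ₗ[ℝ] V') {I : Set ℝ}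
    (hI : I.OrdConnected) {φ h : ℝ → V}
    (hh : LocallyIntegrableOn h I) (hp : Prim I φ h) :
    Prim I (fun t => L (φ t)) (fun t => L (h t)) := by
  have : CompleteSpace V := FiniteDimensional.complete ℝ V
  intro t₀ h0 t ht hle
  have := (LinearMap.toContinuousLinearMap L).intervalIntegral_comp_comm
    (intervalIntegrable_of_mem hI hh h0 ht)
  simp only [LinearMap.coe_toContinuousLinearMap'] at this
  change L (φ t) = L (φ t₀) + ∫ s in t₀..t, L (h s)
  rw [this, hp t₀ h0 t ht hle, map_add]

lemma Prim.congr_ae {I : Set ℝ} (hI : GoodI I) {φ h h' : ℝ → V} (hp : Prim I φ h)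
    (hae : ∀ᵐ t ∂(volume.restrict I), h t = h' t) : Prim I φ h' := by
  intro t₀ h0 t ht hle
  rw [hp t₀ h0 t ht hle]
  congr 1
  apply intervalIntegral.integral_congr_ae
  rw [ae_restrict_iff' hI.closed.measurableSet] at hae
  filter_upwards [hae] with s hs hs'
  exact hs (hI.ord.uIcc_subset h0 ht (uIoc_subset_uIcc hs'))

lemma exists_ker (S : Submodule ℝ V) : ∃ L : V →ₗ[ℝ] V, ∀ v, L v = 0 ↔ v ∈ S := by
  obtain ⟨T, hT⟩ := S.exists_isCompl
  refine ⟨T.subtype ∘ₗ T.projectionOnto S hT.symm, fun v => ?_⟩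
  simp

lemma mem_of_ae_mem [FiniteDimensional ℝ V] {I : Set ℝ} (hI : GoodI I) (S : Submodule ℝ V)
    {φ : ℝ → V} (hφ : ContinuousOn φ I) (hae : ∀ᵐ t ∂(volume.restrict I), φ t ∈ S) :
    ∀ t ∈ I, φ t ∈ S := by
  obtain ⟨L, hL⟩ := exists_ker S
  have hc : ContinuousOn (fun t => L (φ t)) I :=
    (LinearMap.toContinuousLinearMap L).continuous.comp_continuousOn hφ
  have := Measure.eqOn_of_ae_eq (μ := volume) (f := fun t => L (φ t)) (g := fun _ => 0)
    (by filter_upwards [hae] with t ht; exact (hL _).2 ht) hc continuousOn_const hI.dense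
  intro t ht
  exact (hL _).1 (this ht)

lemma deriv_ae_mem [FiniteDimensional ℝ V] {I : Set ℝ} (hI : GoodI I) (S : Submodule ℝ V)
    {φ h : ℝ → V} (hh : LocallyIntegrableOn h I) (hp : Prim I φ h) (hm : ∀ t ∈ I, φ t ∈ S) :
    ∀ᵐ t ∂(volume.restrict I), h t ∈ S := by
  have : CompleteSpace V := FiniteDimensional.complete ℝ V
  obtain ⟨L, hL⟩ := exists_ker S
  have h1 := Prim.map L hI.ord hh hp
  have := ae_zero_of_integral_zero hI (locInt_map L hh) (fun t₀ h0 t ht hle => by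
    have := h1 t₀ h0 t ht hle
    simp only [(hL _).2 (hm _ h0), (hL _).2 (hm _ ht)] at this
    simpa using this.symm)
  filter_upwards [this] with t ht
  exact (hL _).1 ht

lemma eq_of_prim [FiniteDimensional ℝ V] {I : Set ℝ} (hI : GoodI I)
    {φ h h' : ℝ → V} (hh : LocallyIntegrableOn h I) (hh' : LocallyIntegrableOn h' I)
    (hp : Prim I φ h) (hp' : Prim I φ h') :
    ∀ᵐ t ∂(volume.restrict I), h t = h' t := by
  have : CompleteSpace V := FiniteDimensional.complete ℝ V
  have := ae_zero_of_integral_zero hI (hh.sub hh') (fun t₀ h0 t ht hle => by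
    have h1 := hp t₀ h0 t ht hle
    have h2 := hp' t₀ h0 t ht hle
    simp only [Pi.sub_apply]
    rw [intervalIntegral.integral_sub (intervalIntegrable_of_mem hI.ord hh h0 ht)
      (intervalIntegrable_of_mem hI.ord hh' h0 ht)]
    rw [h1] at h2
    rw [add_left_cancel h2, sub_self])
  filter_upwards [this] with t ht
  exact sub_eq_zero.1 ht

lemma exists_ode [FiniteDimensional ℝ V] (G : V →ₗ[ℝ] V) (w p₀ : V) :
    ∃ q : ℝ → V, q 0 = p₀ ∧ Continuous q ∧ Prim univ q (fun t => G (q t) + w) := by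
  have : CompleteSpace V := FiniteDimensional.complete ℝ V
  let H : (V × ℝ) →L[ℝ] (V × ℝ) := LinearMap.toContinuousLinearMap
    (LinearMap.prod (G ∘ₗ LinearMap.fst ℝ V ℝ + (LinearMap.snd ℝ V ℝ).smulRight w) 0)
  have hH : ∀ v : V × ℝ, H v = (G v.1 + v.2 • w, 0) := fun v => by simp [H]
  let Q : ℝ → V × ℝ := fun t => (NormedSpace.exp (t • H)) (p₀, 1)
  have hQ : ∀ t, HasDerivAt Q (H (Q t)) t := fun t => by
    have := (hasDerivAt_exp_smul_const' (𝕂 := ℝ) H t).clm_apply (hasDerivAt_const t ((p₀, 1) : V × ℝ))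
    simpa [Q] using this
  have hQ0 : Q 0 = (p₀, 1) := by simp [Q]
  have h2 : ∀ t, (Q t).2 = 1 := fun t => by
    have hd : ∀ t, HasDerivAt (fun t => (Q t).2) 0 t := fun t => by
      have := (ContinuousLinearMap.snd ℝ V ℝ).hasFDerivAt.comp_hasDerivAt t (hQ t)
      simpa [hH, Function.comp_def] using this
    have := is_const_of_deriv_eq_zero (fun t => (hd t).differentiableAt) (fun t => (hd t).deriv) t 0
    rw [this, hQ0]
  have hd : ∀ t, HasDerivAt (fun t => (Q t).1) (G (Q t).1 + w) t := fun t => by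
    have := (ContinuousLinearMap.fst ℝ V ℝ).hasFDerivAt.comp_hasDerivAt t (hQ t)
    simpa [hH, Function.comp_def, h2] using this
  have hc : Continuous fun t => (Q t).1 :=
    continuous_iff_continuousAt.2 fun t => (hd t).continuousAt
  refine ⟨fun t => (Q t).1, by simp [hQ0], hc, ?_⟩
  intro t₀ _ t _ _
  have hc2 : Continuous fun t => G (Q t).1 + w :=
    ((LinearMap.toContinuousLinearMap G).continuous.comp hc).add continuous_const
  rw [intervalIntegral.integral_eq_sub_of_hasDerivAt (fun s _ => hd s)
    (hc2.intervalIntegrable _ _)]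
  abel

end analysis

section abstract
variable {Y : Type*} [NormedAddCommGroup Y] [NormedSpace ℝ Y] [FiniteDimensional ℝ Y]
  {Z : Type*} [NormedAddCommGroup Z] [NormedSpace ℝ Z] [FiniteDimensional ℝ Z]
  {P : Type*} [NormedAddCommGroup P] [NormedSpace ℝ P] [FiniteDimensional ℝ P]
  {U : Type*} [NormedAddCommGroup U] [NormedSpace ℝ U] [FiniteDimensional ℝ U]

def Tst (e a : Y →ₗ[ℝ] Z) : Submodule ℝ Y := sSup {T | T.map a ≤ T.map e}

lemma le_Tst {e a : Y →ₗ[ℝ] Z} {T : Submodule ℝ Y} (h : T.map a ≤ T.map e) : T ≤ Tst e a :=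
  le_sSup h

lemma Tst_spec (e a : Y →ₗ[ℝ] Z) : (Tst e a).map a ≤ (Tst e a).map e := by
  rw [Submodule.map_le_iff_le_comap]
  refine sSup_le fun T hT => ?_
  rw [← Submodule.map_le_iff_le_comap]
  exact le_trans hT (Submodule.map_mono (le_Tst hT))

def DSol (e a : Y →ₗ[ℝ] Z) (I : Set ℝ) (y : ℝ → Y) : Prop :=
  LocallyIntegrableOn y I ∧ Prim I (fun t => e (y t)) (fun t => a (y t))

lemma DSol.continuousOn {e a : Y →ₗ[ℝ] Z} {I : Set ℝ} (hI : GoodI I) {y : ℝ → Y}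
    (hy : DSol e a I y) : ContinuousOn (fun t => e (y t)) I :=
  Prim.continuousOn hI (locInt_map a hy.1) hy.2

lemma DSol.ae_mem {e a : Y →ₗ[ℝ] Z} {I : Set ℝ} (hI : GoodI I) {y : ℝ → Y}
    (hy : DSol e a I y) : ∀ᵐ t ∂(volume.restrict I), y t ∈ Tst e a := by
  let F : Set (Submodule ℝ Y) := {T | ∀ᵐ t ∂(volume.restrict I), y t ∈ T}
  obtain ⟨T, hTF, hT⟩ := wellFounded_lt.has_min F ⟨⊤, by simp [F]⟩
  have h1 : ∀ t ∈ I, e (y t) ∈ T.map e := mem_of_ae_mem hI _ (hy.continuousOn hI) (by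
    have : ∀ᵐ t ∂(volume.restrict I), y t ∈ T := hTF
    filter_upwards [this] with t ht
    exact Submodule.mem_map_of_mem ht)
  have h2 := deriv_ae_mem hI _ (locInt_map a hy.1) hy.2 h1
  have h3 : T ⊓ (T.map e).comap a ∈ F := by
    have : ∀ᵐ t ∂(volume.restrict I), y t ∈ T := hTF
    change ∀ᵐ t ∂(volume.restrict I), y t ∈ T ⊓ (T.map e).comap a
    filter_upwards [this, h2] with t ht ht2
    exact ⟨ht, ht2⟩
  have h4 : T ≤ (T.map e).comap a := by
    have := hT _ h3
    have h5 : T ⊓ (T.map e).comap a = T := by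
      by_contra hne
      exact this (lt_of_le_of_ne inf_le_left hne)
    exact inf_eq_left.1 h5
  have h6 : T ≤ Tst e a := le_Tst (Submodule.map_le_iff_le_comap.2 h4)
  have : ∀ᵐ t ∂(volume.restrict I), y t ∈ T := hTF
  filter_upwards [this] with t ht using h6 ht

lemma DSol.map_mem {e a : Y →ₗ[ℝ] Z} {I : Set ℝ} (hI : GoodI I) {y : ℝ → Y}
    (hy : DSol e a I y) : ∀ t ∈ I, e (y t) ∈ (Tst e a).map e := by
  refine mem_of_ae_mem hI _ (hy.continuousOn hI) ?_
  filter_upwards [hy.ae_mem hI] with t ht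
  exact Submodule.mem_map_of_mem ht

def STraj (A' : P →ₗ[ℝ] P) (B' : U →ₗ[ℝ] P) (I : Set ℝ) (p : ℝ → P) (g : ℝ → U) : Prop :=
  LocallyIntegrableOn p I ∧ LocallyIntegrableOn g I ∧ Prim I p (fun t => A' (p t) + B' (g t))

def RealOn (e a : Y →ₗ[ℝ] Z) (A' : P →ₗ[ℝ] P) (B' : U →ₗ[ℝ] P) (C' : P →ₗ[ℝ] Y)
    (D' : U →ₗ[ℝ] Y) (I : Set ℝ) : Prop :=
  (∀ y, DSol e a I y → ∃ p g, STraj A' B' I p g ∧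
    ∀ᵐ t ∂(volume.restrict I), y t = C' (p t) + D' (g t)) ∧
  (∀ p g, STraj A' B' I p g → ∃ y, DSol e a I y ∧
    ∀ᵐ t ∂(volume.restrict I), y t = C' (p t) + D' (g t))

structure NiceR (e a : Y →ₗ[ℝ] Z) (A' : P →ₗ[ℝ] P) (B' : U →ₗ[ℝ] P) (C' : P →ₗ[ℝ] Y)
    (D' : U →ₗ[ℝ] Y) : Prop where
  eD : ∀ u, e (D' u) = 0
  inj : Function.Injective (fun p => e (C' p))
  hA : ∀ p, e (C' (A' p)) = a (C' p)
  hB : ∀ u, e (C' (B' u)) = a (D' u)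
  hW : ∀ z ∈ (Tst e a).map e, ∃ p, e (C' p) = z
  hS : ∀ s ∈ Tst e a, e s = 0 → ∃ u, D' u = s

lemma NiceR.bwd {e a : Y →ₗ[ℝ] Z} {A' : P →ₗ[ℝ] P} {B' : U →ₗ[ℝ] P} {C' : P →ₗ[ℝ] Y}
    {D' : U →ₗ[ℝ] Y} (h : NiceR e a A' B' C' D') {I : Set ℝ} (hI : I.OrdConnected)
    {p : ℝ → P} {g : ℝ → U} (ht : STraj A' B' I p g) :
    DSol e a I (fun t => C' (p t) + D' (g t)) := by
  refine ⟨(locInt_map C' ht.1).add (locInt_map D' ht.2.1), ?_⟩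
  have h1 := Prim.map (V' := Z) (e ∘ₗ C') hI
    ((locInt_map A' ht.1).add (locInt_map B' ht.2.1)) ht.2.2
  have e1 : (fun t => e (C' (p t) + D' (g t))) = fun t => (e ∘ₗ C') (p t) := by
    funext t; simp [h.eD]
  have e2 : (fun t => a (C' (p t) + D' (g t))) =
      fun t => (e ∘ₗ C') (A' (p t) + B' (g t)) := by
    funext t; simp [h.hA, h.hB]
  rw [e1, e2]
  exact h1

lemma NiceR.fwd {e a : Y →ₗ[ℝ] Z} {A' : P →ₗ[ℝ] P} {B' : U →ₗ[ℝ] P} {C' : P →ₗ[ℝ] Y}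
    {D' : U →ₗ[ℝ] Y} (h : NiceR e a A' B' C' D') {I : Set ℝ} (hI : GoodI I)
    {y : ℝ → Y} (hy : DSol e a I y) : ∃ p g, STraj A' B' I p g ∧
      ∀ᵐ t ∂(volume.restrict I), y t = C' (p t) + D' (g t) := by
  obtain ⟨N, hN⟩ := LinearMap.exists_leftInverse_of_injective (e ∘ₗ C')
    (LinearMap.ker_eq_bot.2 h.inj)
  have hN' : ∀ p, N (e (C' p)) = p := fun p => LinearMap.congr_fun hN p
  obtain ⟨Q, hQ⟩ := LinearMap.exists_rightInverse_of_surjective D'.rangeRestrict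
    D'.range_rangeRestrict
  obtain ⟨J, hJ⟩ := LinearMap.exists_leftInverse_of_injective (LinearMap.range D').subtype
    (Submodule.ker_subtype _)
  have hQ' : ∀ u, D' (Q (J (D' u))) = D' u := fun u => by
    have h1 : J (D' u) = D'.rangeRestrict u := LinearMap.congr_fun hJ (D'.rangeRestrict u)
    have h2 := LinearMap.congr_fun hQ (D'.rangeRestrict u)
    rw [h1]
    exact congrArg Subtype.val h2
  have hC : ∀ p, C' p ∈ Tst e a := fun p => by
    have : LinearMap.range C' ≤ Tst e a := le_Tst (by
      rintro _ ⟨_, ⟨q, rfl⟩, rfl⟩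
      exact ⟨C' (A' q), ⟨_, rfl⟩, h.hA q⟩)
    exact this ⟨p, rfl⟩
  let p : ℝ → P := fun t => N (e (y t))
  let g : ℝ → U := fun t => Q (J (y t - C' (p t)))
  have hp : LocallyIntegrableOn p I := locInt_map N (locInt_map e hy.1)
  have hg : LocallyIntegrableOn g I :=
    locInt_map Q (locInt_map J (hy.1.sub (locInt_map C' hp)))
  have hae : ∀ᵐ t ∂(volume.restrict I), y t = C' (p t) + D' (g t) := by
    filter_upwards [hy.ae_mem hI] with t ht
    obtain ⟨q, hq⟩ := h.hW (e (y t)) (Submodule.mem_map_of_mem ht)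
    have hpq : p t = q := by simp only [p, ← hq, hN']
    obtain ⟨u, hu⟩ := h.hS (y t - C' (p t)) (Submodule.sub_mem _ ht (hC _))
      (by rw [map_sub, hpq, hq, sub_self])
    have : D' (g t) = y t - C' (p t) := by simp only [g]; rw [← hu, hQ']
    rw [this]; abel
  refine ⟨p, g, ⟨hp, hg, ?_⟩, hae⟩
  refine Prim.congr_ae hI (Prim.map N hI.ord (locInt_map a hy.1) hy.2) ?_
  filter_upwards [hae] with t ht
  conv_lhs => rw [ht, map_add, ← h.hA, ← h.hB, ← map_add, ← map_add, hN']

lemma NiceR.real {e a : Y →ₗ[ℝ] Z} {A' : P →ₗ[ℝ] P} {B' : U →ₗ[ℝ] P} {C' : P →ₗ[ℝ] Y}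
    {D' : U →ₗ[ℝ] Y} (h : NiceR e a A' B' C' D') {I : Set ℝ} (hI : GoodI I) :
    RealOn e a A' B' C' D' I :=
  ⟨fun _ hy => h.fwd hI hy, fun _ _ ht => ⟨_, h.bwd hI.ord ht, by simp⟩⟩

lemma exists_niceR (e a : Y →ₗ[ℝ] Z) : ∃ (r k : ℕ) (A' : (Fin r → ℝ) →ₗ[ℝ] (Fin r → ℝ))
    (B' : (Fin k → ℝ) →ₗ[ℝ] (Fin r → ℝ)) (C' : (Fin r → ℝ) →ₗ[ℝ] Y) (D' : (Fin k → ℝ) →ₗ[ℝ] Y),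
    r = Module.finrank ℝ ((Tst e a).map e) ∧ NiceR e a A' B' C' D' := by
  let T := Tst e a
  let W := T.map e
  let S : Submodule ℝ Y := T ⊓ LinearMap.ker e
  let eT : T →ₗ[ℝ] W := (e.domRestrict T).codRestrict W
    (fun t => Submodule.mem_map_of_mem t.2)
  have hsurj : Function.Surjective eT := by
    rintro ⟨_, t, ht, rfl⟩
    exact ⟨⟨t, ht⟩, rfl⟩
  obtain ⟨R, hR⟩ := LinearMap.exists_rightInverse_of_surjective eT (LinearMap.range_eq_top.2 hsurj)
  have hR' : ∀ w : W, e (R w : Y) = w := fun w => congrArg Subtype.val (LinearMap.congr_fun hR w)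
  let aT : T →ₗ[ℝ] W := (a.domRestrict T).codRestrict W
    (fun t => Tst_spec e a (Submodule.mem_map_of_mem t.2))
  let bW := (Module.finBasis ℝ W).equivFun
  let bS := (Module.finBasis ℝ S).equivFun
  let iS : S →ₗ[ℝ] T := Submodule.inclusion inf_le_left
  refine ⟨_, _, bW.toLinearMap ∘ₗ aT ∘ₗ R ∘ₗ bW.symm.toLinearMap,
    bW.toLinearMap ∘ₗ aT ∘ₗ iS ∘ₗ bS.symm.toLinearMap,
    T.subtype ∘ₗ R ∘ₗ bW.symm.toLinearMap, S.subtype ∘ₗ bS.symm.toLinearMap, rfl, ?_⟩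
  constructor
  · intro u
    exact (bS.symm u).2.2
  · intro p q hpq
    simp only [LinearMap.comp_apply, Submodule.subtype_apply, hR'] at hpq
    exact bW.symm.injective (Subtype.ext hpq)
  · intro p
    simp [hR', aT]
  · intro p
    simp [hR', aT, iS]
  · intro z hz
    exact ⟨bW ⟨z, hz⟩, by simp [hR']⟩
  · intro s hs hs0
    exact ⟨bS ⟨s, hs, hs0⟩, by simp⟩

lemma exists_const_traj (A' : P →ₗ[ℝ] P) (B' : U →ₗ[ℝ] P) (p₀ : P) (v : U) :
    ∃ p : ℝ → P, p 0 = p₀ ∧ Continuous p ∧ STraj A' B' univ p (fun _ => v) := by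
  obtain ⟨q, h0, hc, hp⟩ := exists_ode A' (B' v) p₀
  exact ⟨q, h0, hc, hc.locallyIntegrable.locallyIntegrableOn _,
    (locallyIntegrable_const v).locallyIntegrableOn _, hp⟩

lemma exists_step_traj (A' : P →ₗ[ℝ] P) (B' : U →ₗ[ℝ] P) (v : U) :
    ∃ p : ℝ → P, STraj A' B' univ p ((Ici 0).indicator (fun _ => v)) := by
  obtain ⟨q, h0, hc, hp⟩ := exists_ode A' (B' v) 0
  let f : ℝ → P := (Ici (0 : ℝ)).indicator (fun t => A' (q t) + B' v)
  have hcf : Continuous fun t => A' (q t) + B' v :=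
    ((LinearMap.toContinuousLinearMap A').continuous.comp hc).add continuous_const
  have hf : LocallyIntegrable f := hcf.locallyIntegrable.indicator measurableSet_Ici
  have hfi : ∀ s t, IntervalIntegrable f volume s t := fun s t =>
    (hf.integrableOn_isCompact isCompact_uIcc).intervalIntegrable
  let p : ℝ → P := (Ici (0 : ℝ)).indicator q
  have key : ∀ t, p t = ∫ s in (0 : ℝ)..t, f s := by
    intro t
    rcases le_or_gt 0 t with ht | ht
    · have h1 : p t = q t := indicator_of_mem (show t ∈ Ici (0 : ℝ) from ht) q
      rw [h1, hp 0 trivial t trivial ht, h0, zero_add]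
      apply intervalIntegral.integral_congr
      intro s hs
      rw [uIcc_of_le ht] at hs
      exact (indicator_of_mem (show s ∈ Ici (0 : ℝ) from hs.1) (fun t => A' (q t) + B' v)).symm
    · have h1 : p t = 0 := indicator_of_notMem (by simpa using ht) q
      rw [h1, intervalIntegral.integral_symm, intervalIntegral.integral_of_le ht.le,
        ← integral_Ico_eq_integral_Ioc, setIntegral_eq_zero_of_forall_eq_zero, neg_zero]
      intro s hs
      exact indicator_of_notMem (s := Ici (0 : ℝ)) (by simpa using hs.2) _
  refine ⟨p, (hc.locallyIntegrable.indicator measurableSet_Ici).locallyIntegrableOn _,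
    ((locallyIntegrable_const v).indicator measurableSet_Ici).locallyIntegrableOn _, ?_⟩
  intro t₀ _ t _ _
  have hfe : (fun s => A' (p s) + B' ((Ici (0 : ℝ)).indicator (fun _ => v) s)) = f := by
    funext s
    by_cases hs : s ∈ Ici (0 : ℝ)
    · simp only [p, f, indicator_of_mem hs]
    · simp only [p, f, indicator_of_notMem hs, map_zero, add_zero]
  rw [show (∫ s in t₀..t, A' (p s) + B' ((Ici (0 : ℝ)).indicator (fun _ => v) s)) =
    ∫ s in t₀..t, f s by rw [← hfe], key t, key t₀,
    intervalIntegral.integral_add_adjacent_intervals (hfi _ _) (hfi _ _)]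

lemma STraj.continuous {A' : P →ₗ[ℝ] P} {B' : U →ₗ[ℝ] P} {p : ℝ → P} {g : ℝ → U}
    (h : STraj A' B' univ p g) : Continuous p :=
  continuousOn_univ.1 (Prim.continuousOn goodI_univ
    ((locInt_map A' h.1).add (locInt_map B' h.2.1)) h.2.2)

lemma continuous_lin (L : P →ₗ[ℝ] Y) : Continuous L := L.continuous_of_finiteDimensional

lemma niceR_of_real (e a : Y →ₗ[ℝ] Z) (A' : P →ₗ[ℝ] P) (B' : U →ₗ[ℝ] P) (C' : P →ₗ[ℝ] Y)
    (D' : U →ₗ[ℝ] Y) (hr : RealOn e a A' B' C' D' univ)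
    (hdim : Module.finrank ℝ P ≤ Module.finrank ℝ ((Tst e a).map e)) :
    NiceR e a A' B' C' D' := by
  have eD : ∀ u, e (D' u) = 0 := by
    intro v
    obtain ⟨p, hp⟩ := exists_step_traj A' B' v
    obtain ⟨y, hy, hae⟩ := hr.2 _ _ hp
    rw [Measure.restrict_univ] at hae
    have hcy : Continuous fun t => e (y t) := continuousOn_univ.1 (hy.continuousOn goodI_univ)
    have hcp : Continuous fun t => e (C' (p t)) :=
      (continuous_lin (e ∘ₗ C')).comp hp.continuous
    have h1 := Measure.eqOn_of_ae_eq (μ := volume) (s := Ici (0 : ℝ))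
      (f := fun t => e (y t) - e (C' (p t))) (g := fun _ => e (D' v)) (by
        change ∀ᵐ t ∂(volume.restrict (Ici (0 : ℝ))), _
        rw [ae_restrict_iff' measurableSet_Ici]
        filter_upwards [hae] with t ht ht0
        rw [ht, indicator_of_mem ht0]; simp) (hcy.sub hcp).continuousOn continuousOn_const
        (by simp)
    have h2 := Measure.eqOn_of_ae_eq (μ := volume) (s := Iio (0 : ℝ))
      (f := fun t => e (y t) - e (C' (p t))) (g := fun _ => 0) (by
        change ∀ᵐ t ∂(volume.restrict (Iio (0 : ℝ))), _
        rw [ae_restrict_iff' measurableSet_Iio]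
        filter_upwards [hae] with t ht ht0
        rw [ht, indicator_of_notMem (s := Ici (0 : ℝ)) (by simpa using ht0)]; simp) (hcy.sub hcp).continuousOn
        continuousOn_const
        (by rw [isOpen_Iio.interior_eq]; exact subset_closure)
    have h3 := h2.closure (hcy.sub hcp) continuous_const
    rw [closure_Iio] at h3
    have h4 := h3 (show (0 : ℝ) ∈ Iic (0 : ℝ) from mem_Iic.2 le_rfl)
    have h5 := h1 (show (0 : ℝ) ∈ Ici (0 : ℝ) from mem_Ici.2 le_rfl)
    simp only at h4 h5
    rw [← h5, h4]
  have hMp : ∀ y p g, DSol e a univ y → STraj A' B' univ p g →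
      (∀ᵐ t ∂(volume.restrict univ), y t = C' (p t) + D' (g t)) → ∀ t, e (y t) = e (C' (p t)) := by
    intro y p g hy hp hae t
    refine Measure.eqOn_of_ae_eq (μ := volume) (f := fun t => e (y t))
      (g := fun t => e (C' (p t))) ?_ (hy.continuousOn goodI_univ)
      ((continuous_lin (e ∘ₗ C')).comp hp.continuous).continuousOn goodI_univ.dense
      (mem_univ t)
    filter_upwards [hae] with t ht
    rw [ht, map_add, eD, add_zero]
  obtain ⟨r, k, A₀, B₀, C₀, D₀, hrk, h0⟩ := exists_niceR e a
  have hW : ∀ z ∈ (Tst e a).map e, ∃ p, e (C' p) = z := by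
    intro z hz
    obtain ⟨z₀, hz₀⟩ := h0.hW z hz
    obtain ⟨q, hq0, hqc, hq⟩ := exists_const_traj A₀ B₀ z₀ 0
    have hy := h0.bwd ordConnected_univ hq
    obtain ⟨p, g, hp, hae⟩ := hr.1 _ hy
    have := hMp _ _ _ hy hp hae 0
    refine ⟨p 0, ?_⟩
    rw [← this, ← hz₀, hq0]; simp
  have inj : Function.Injective (fun p => e (C' p)) := by
    have h1 : (Tst e a).map e ≤ LinearMap.range (e ∘ₗ C') := fun z hz => hW z hz
    have h2 := Submodule.finrank_mono h1
    have h3 := LinearMap.finrank_range_add_finrank_ker (e ∘ₗ C')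
    have h4 : Module.finrank ℝ (LinearMap.ker (e ∘ₗ C')) = 0 := by omega
    exact LinearMap.ker_eq_bot.1 (Submodule.finrank_eq_zero.1 h4)
  have hAB : ∀ p₀ v, e (C' (A' p₀ + B' v)) = a (C' p₀ + D' v) := by
    intro p₀ v
    obtain ⟨p, hp0, hpc, hp⟩ := exists_const_traj A' B' p₀ v
    obtain ⟨y, hy, hae⟩ := hr.2 _ _ hp
    have h1 : Prim univ (fun t => e (C' (p t))) (fun t => a (y t)) := by
      have := hy.2
      rwa [show (fun t => e (y t)) = fun t => e (C' (p t)) from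
        funext (hMp _ _ _ hy hp hae)] at this
    have hli := (locInt_map A' hp.1).add (locInt_map B' hp.2.1)
    have h2 := Prim.map (e ∘ₗ C') ordConnected_univ hli hp.2.2
    have h3 := eq_of_prim goodI_univ (locInt_map (e ∘ₗ C') hli) (locInt_map a hy.1) h2 h1
    have h4 := Measure.eqOn_of_ae_eq (μ := volume) (f := fun t => e (C' (A' (p t) + B' v)))
      (g := fun t => a (C' (p t) + D' v)) (s := univ) (by
        filter_upwards [h3, hae] with t ht ht'
        rw [← ht']
        exact ht)
      (Continuous.continuousOn ((continuous_lin (e ∘ₗ C')).comp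
        (((continuous_lin A').comp hpc).add continuous_const)))
      (Continuous.continuousOn ((continuous_lin a).comp
        (((continuous_lin C').comp hpc).add continuous_const))) goodI_univ.dense (mem_univ 0)
    simpa [hp0] using h4
  refine ⟨eD, inj, fun p => by simpa using hAB p 0, fun u => by simpa using hAB 0 u, hW, ?_⟩
  intro s hs hs0
  obtain ⟨u, hu⟩ := h0.hS s hs hs0
  obtain ⟨q, hq0, hqc, hq⟩ := exists_const_traj A₀ B₀ 0 u
  have hy := h0.bwd ordConnected_univ hq
  obtain ⟨p, g, hp, hae⟩ := hr.1 _ hy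
  have hp0 : p 0 = 0 := by
    apply inj
    have := hMp _ _ _ hy hp hae 0
    simp only [map_zero]
    rw [← this, hq0, map_zero, zero_add, hu, hs0]
  have := mem_of_ae_mem goodI_univ (LinearMap.range D')
    (φ := fun t => C₀ (q t) + D₀ u - C' (p t)) (Continuous.continuousOn
      ((((continuous_lin C₀).comp hqc).add continuous_const).sub
        ((continuous_lin C').comp hp.continuous))) (by
      filter_upwards [hae] with t ht
      exact ⟨g t, by rw [ht]; abel⟩) 0 (mem_univ 0)
  simpa [hq0, hp0, hu] using this

end abstract

section bridge
variable {c n m nh k : ℕ}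

noncomputable def eMap (m : ℕ) (E : Matrix (Fin c) (Fin n) ℝ) :
    (Fin n ⊕ Fin m → ℝ) →ₗ[ℝ] (Fin c → ℝ) :=
  E.mulVecLin ∘ₗ LinearMap.funLeft ℝ ℝ Sum.inl

noncomputable def aMap (A : Matrix (Fin c) (Fin n) ℝ) (B : Matrix (Fin c) (Fin m) ℝ) :
    (Fin n ⊕ Fin m → ℝ) →ₗ[ℝ] (Fin c → ℝ) :=
  A.mulVecLin ∘ₗ LinearMap.funLeft ℝ ℝ Sum.inl + B.mulVecLin ∘ₗ LinearMap.funLeft ℝ ℝ Sum.inr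

def inlMap (n m : ℕ) : (Fin n → ℝ) →ₗ[ℝ] (Fin n ⊕ Fin m → ℝ) where
  toFun x := Sum.elim x 0
  map_add' x y := by ext (i | i) <;> simp
  map_smul' x y := by ext (i | i) <;> simp

def inrMap (n m : ℕ) : (Fin m → ℝ) →ₗ[ℝ] (Fin n ⊕ Fin m → ℝ) where
  toFun x := Sum.elim 0 x
  map_add' x y := by ext (i | i) <;> simp
  map_smul' x y := by ext (i | i) <;> simp

lemma dsol_iff (E A : Matrix (Fin c) (Fin n) ℝ) (B : Matrix (Fin c) (Fin m) ℝ) (I : Set ℝ)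
    (x : ℝ → Fin n → ℝ) (u : ℝ → Fin m → ℝ) :
    IsDAESolution E A B I x u ↔ DSol (eMap m E) (aMap A B) I (fun t => Sum.elim (x t) (u t)) := by
  have h : (LocallyIntegrableOn x I ∧ LocallyIntegrableOn u I) ↔
      LocallyIntegrableOn (fun t => (Sum.elim (x t) (u t) : Fin n ⊕ Fin m → ℝ)) I := by
    constructor
    · rintro ⟨hx, hu⟩
      have := (locInt_map (inlMap n m) hx).add (locInt_map (inrMap n m) hu)
      have he : (fun t => (Sum.elim (x t) (u t) : Fin n ⊕ Fin m → ℝ)) =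
          (fun t => inlMap n m (x t)) + fun t => inrMap n m (u t) := by
        funext t
        ext (i | i) <;> simp [inlMap, inrMap]
      rw [he]
      exact this
    · intro hy
      exact ⟨locInt_map (LinearMap.funLeft ℝ ℝ Sum.inl) hy,
        locInt_map (LinearMap.funLeft ℝ ℝ Sum.inr) hy⟩
  unfold IsDAESolution DSol
  rw [← and_assoc, h]
  exact Iff.rfl

lemma straj_iff (Al : Matrix (Fin nh) (Fin nh) ℝ) (Bl : Matrix (Fin nh) (Fin k) ℝ) (I : Set ℝ)
    (p : ℝ → Fin nh → ℝ) (g : ℝ → Fin k → ℝ) :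
    IsStateTraj Al Bl I p g ↔ STraj Al.mulVecLin Bl.mulVecLin I p g := Iff.rfl

lemma realizes_iff (E A : Matrix (Fin c) (Fin n) ℝ) (B : Matrix (Fin c) (Fin m) ℝ)
    (Al : Matrix (Fin nh) (Fin nh) ℝ) (Bl : Matrix (Fin nh) (Fin k) ℝ)
    (Cl : Matrix (Fin n ⊕ Fin m) (Fin nh) ℝ) (Dl : Matrix (Fin n ⊕ Fin m) (Fin k) ℝ)
    (I : Set ℝ) :
    RealizesOn E A B Al Bl Cl Dl I ↔ RealOn (eMap m E) (aMap A B) Al.mulVecLin Bl.mulVecLin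
      Cl.mulVecLin Dl.mulVecLin I := by
  have hs : ∀ y : ℝ → Fin n ⊕ Fin m → ℝ,
      (fun t => Sum.elim (fun i => y t (Sum.inl i)) (fun i => y t (Sum.inr i))) = y := by
    intro y; funext t; ext (i | i) <;> rfl
  constructor
  · rintro ⟨h1, h2⟩
    refine ⟨fun y hy => ?_, fun p g hpg => ?_⟩
    · obtain ⟨p, g, hpg, hae⟩ := h1 (fun t i => y t (Sum.inl i)) (fun t i => y t (Sum.inr i))
        ((dsol_iff E A B I _ _).2 (by rw [hs]; exact hy))
      refine ⟨p, g, hpg, ?_⟩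
      filter_upwards [hae] with t ht
      exact (congrFun (hs y) t).symm.trans ht
    · obtain ⟨x, u, hxu, hae⟩ := h2 p g hpg
      exact ⟨_, (dsol_iff E A B I _ _).1 hxu, hae⟩
  · rintro ⟨h1, h2⟩
    refine ⟨fun x u hxu => ?_, fun p g hpg => ?_⟩
    · exact h1 _ ((dsol_iff E A B I _ _).1 hxu)
    · obtain ⟨y, hy, hae⟩ := h2 p g hpg
      refine ⟨fun t i => y t (Sum.inl i), fun t i => y t (Sum.inr i),
        (dsol_iff E A B I _ _).2 (by rw [hs]; exact hy), ?_⟩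
      filter_upwards [hae] with t ht
      exact (congrFun (hs y) t).trans ht

lemma eMap_mulVec (E : Matrix (Fin c) (Fin n) ℝ) (Cl : Matrix (Fin n ⊕ Fin m) (Fin nh) ℝ)
    (p : Fin nh → ℝ) : eMap m E (Cl.mulVec p) = (E * firstRows Cl).mulVec p := by
  rw [← Matrix.mulVec_mulVec]; rfl

lemma rank_eq_of_injective {ι : Type*} [Fintype ι] (M : Matrix ι (Fin nh) ℝ)
    (h : Function.Injective M.mulVec) : M.rank = nh := by
  have := LinearMap.finrank_range_of_inj (f := M.mulVecLin) h
  rw [Matrix.rank, this]; simp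

lemma injective_of_rank_eq {ι : Type*} [Fintype ι] (M : Matrix ι (Fin nh) ℝ)
    (h : M.rank = nh) : Function.Injective M.mulVec := by
  have h3 := LinearMap.finrank_range_add_finrank_ker M.mulVecLin
  rw [Matrix.rank] at h
  have h4 : Module.finrank ℝ (LinearMap.ker M.mulVecLin) = 0 := by
    simp only [Module.finrank_fin_fun] at h3
    omega
  exact LinearMap.ker_eq_bot.1 (Submodule.finrank_eq_zero.1 h4)

lemma nice_cases {I : Set ℝ} (h : IsNiceInterval I) :
    GoodI I ∨ (I.Subsingleton) := by
  rcases h with ⟨a, b, rfl⟩ | ⟨a, rfl⟩ | ⟨a, rfl⟩ | rfl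
  · rcases lt_or_ge a b with hab | hab
    · exact Or.inl ⟨isClosed_Icc, ordConnected_Icc, (closure_interior_Icc hab.ne).ge⟩
    · exact Or.inr (Set.subsingleton_Icc_of_ge hab)
  · exact Or.inl ⟨isClosed_Ici, ordConnected_Ici, by simp⟩
  · exact Or.inl ⟨isClosed_Iic, ordConnected_Iic, by simp⟩
  · exact Or.inl goodI_univ

lemma realizes_of_subsingleton (E A : Matrix (Fin c) (Fin n) ℝ) (B : Matrix (Fin c) (Fin m) ℝ)
    (Al : Matrix (Fin nh) (Fin nh) ℝ) (Bl : Matrix (Fin nh) (Fin k) ℝ)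
    (Cl : Matrix (Fin n ⊕ Fin m) (Fin nh) ℝ) (Dl : Matrix (Fin n ⊕ Fin m) (Fin k) ℝ)
    {I : Set ℝ} (hI : I.Subsingleton) : RealizesOn E A B Al Bl Cl Dl I := by
  have h0 : volume.restrict I = 0 := by
    rw [Measure.restrict_eq_zero]; exact hI.measure_zero volume
  refine ⟨fun x u _ => ⟨fun _ => 0, fun _ => 0, ⟨locallyIntegrableOn_zero,
    locallyIntegrableOn_zero, ?_⟩, by simp [h0]⟩, fun p g _ => ⟨fun _ => 0, fun _ => 0,
    ⟨locallyIntegrableOn_zero, locallyIntegrableOn_zero, ?_⟩, by simp [h0]⟩⟩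
  · intro t₀ _ t _ _; simp
  · intro t₀ _ t _ _; simp

end bridge

end MinReal

/-- Corollary (Minimality), part 2: a minimal realization of `B_ℝ(E,A,B)` whose stacked
matrix `[B'; D']` is of full column rank, or zero with a single column, is an
ODE-LTI associated with the DAE. -/
theorem minimal_realization_is_associated {c n m nh' k' : ℕ}
    (E A : Matrix (Fin c) (Fin n) ℝ) (B : Matrix (Fin c) (Fin m) ℝ)
    (A' : Matrix (Fin nh') (Fin nh') ℝ) (B' : Matrix (Fin nh') (Fin k') ℝ)
    (C' : Matrix (Fin n ⊕ Fin m) (Fin nh') ℝ) (D' : Matrix (Fin n ⊕ Fin m) (Fin k') ℝ)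
    (hreal : RealizesOn E A B A' B' C' D' Set.univ)
    (hmin : ∀ (nh'' k'' : ℕ) (A'' : Matrix (Fin nh'') (Fin nh'') ℝ)
      (B'' : Matrix (Fin nh'') (Fin k'') ℝ) (C'' : Matrix (Fin n ⊕ Fin m) (Fin nh'') ℝ)
      (D'' : Matrix (Fin n ⊕ Fin m) (Fin k'') ℝ),
      RealizesOn E A B A'' B'' C'' D'' Set.univ → nh' ≤ nh'')
    (hrank : (Matrix.fromRows B' D').rank = k' ∨ (B' = 0 ∧ D' = 0 ∧ k' = 1)) :
    IsAssociated E A B A' B' C' D' := by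
  classical
  obtain ⟨r, k, A₀, B₀, C₀, D₀, hrk, h0⟩ :=
    MinReal.exists_niceR (MinReal.eMap m E) (MinReal.aMap A B)
  have hle : nh' ≤ r := by
    refine hmin r k (LinearMap.toMatrix' A₀) (LinearMap.toMatrix' B₀) (LinearMap.toMatrix' C₀)
      (LinearMap.toMatrix' D₀) ?_
    rw [MinReal.realizes_iff]
    simp only [← Matrix.toLin'_apply', Matrix.toLin'_toMatrix']
    exact h0.real MinReal.goodI_univ
  have hN := MinReal.niceR_of_real _ _ _ _ _ _
    ((MinReal.realizes_iff E A B A' B' C' D' Set.univ).1 hreal)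
    (by rw [← hrk]; simpa using hle)
  have hrk' : (E * firstRows C').rank = nh' := by
    apply MinReal.rank_eq_of_injective
    intro p q hpq
    apply hN.inj
    simpa only [Matrix.mulVecLin_apply, MinReal.eMap_mulVec] using hpq
  refine ⟨?_, ?_, ?_, hrk', ?_⟩
  · have h1 := Matrix.rank_mul_le_left E (firstRows C')
    have h2 := E.rank_le_width
    omega
  · rcases hrank with h | ⟨h1, h2, h3⟩
    · right
      have hinj := MinReal.injective_of_rank_eq _ h
      apply MinReal.rank_eq_of_injective
      have key : ∀ v, D'.mulVec v = 0 → v = 0 := by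
        intro v hv
        have hb : B'.mulVec v = 0 := by
          apply hN.inj
          have := hN.hB v
          simp only [Matrix.mulVecLin_apply, hv, map_zero] at this
          simpa only [Matrix.mulVecLin_apply, Matrix.mulVec_zero, map_zero] using this
        apply hinj
        rw [Matrix.fromRows_mulVec, hv, hb, Matrix.mulVec_zero]
        ext (i | i) <;> rfl
      intro v w hvw
      apply sub_eq_zero.1
      apply key
      rw [Matrix.mulVec_sub, sub_eq_zero]
      exact hvw
    · exact Or.inl ⟨h2, h1, h3⟩
  · apply Matrix.toLin'.injective
    apply LinearMap.ext
    intro w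
    have := hN.eD w
    rw [Matrix.mulVecLin_apply, MinReal.eMap_mulVec] at this
    simpa using this
  · intro I hI
    rcases MinReal.nice_cases hI with hg | hs
    · exact (MinReal.realizes_iff E A B A' B' C' D' I).2 (hN.real hg)
    · exact MinReal.realizes_of_subsingleton E A B A' B' C' D' hs
end

section
/- For z ∈ V(E,A,B), the DAE d(Ex)/dt = Ax + Bu is behaviorally stabilizable from z if and only if there exists a solution (x,u) on [0,∞) with Ex(0) = z and lim_{t→∞} Ex(t) = 0. -/
open MeasureTheory Set Filter Matrix

section Aux
variable {X U Z : Type} [NormedAddCommGroup X] [NormedSpace ℝ X] [FiniteDimensional ℝ X]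
  [NormedAddCommGroup U] [NormedSpace ℝ U] [FiniteDimensional ℝ U]
  [NormedAddCommGroup Z] [NormedSpace ℝ Z] [FiniteDimensional ℝ Z]

/-- Continuous solutions on `[0,∞)`. -/
def contSols (E A : X →L[ℝ] Z) (B : U →L[ℝ] Z) : Submodule ℝ (C(ℝ, X) × C(ℝ, U)) where
  carrier := {p | ∀ t, 0 ≤ t → E (p.1 t) = E (p.1 0) + ∫ s in (0:ℝ)..t, (A (p.1 s) + B (p.2 s))}
  add_mem' := by
    intro p q hp hq t ht
    have h1 : IntervalIntegrable (fun s => A (p.1 s) + B (p.2 s)) volume 0 t :=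
      Continuous.intervalIntegrable (by fun_prop) _ _
    have h2 : IntervalIntegrable (fun s => A (q.1 s) + B (q.2 s)) volume 0 t :=
      Continuous.intervalIntegrable (by fun_prop) _ _
    have h3 : (∫ s in (0:ℝ)..t, (A ((p + q).1 s) + B ((p + q).2 s))) =
        (∫ s in (0:ℝ)..t, (A (p.1 s) + B (p.2 s))) + ∫ s in (0:ℝ)..t, (A (q.1 s) + B (q.2 s)) := by
      rw [← intervalIntegral.integral_add h1 h2]
      congr 1; ext s; simp; abel
    rw [h3]
    have e1 := hp t ht
    have e2 := hq t ht
    simp only [Prod.fst_add, ContinuousMap.add_apply, map_add]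
    rw [e1, e2]; abel
  zero_mem' := by
    intro t ht
    simp
  smul_mem' := by
    intro a p hp t ht
    have h3 : (∫ s in (0:ℝ)..t, (A ((a • p).1 s) + B ((a • p).2 s))) =
        a • (∫ s in (0:ℝ)..t, (A (p.1 s) + B (p.2 s))) := by
      rw [← intervalIntegral.integral_smul]
      congr 1; ext s; simp
    rw [h3]
    have e1 := hp t ht
    simp only [Prod.smul_fst, ContinuousMap.smul_apply, map_smul]
    rw [e1, smul_add]

/-- Endpoint evaluation on `[0,1]`. -/
def evEnds (E A : X →L[ℝ] Z) (B : U →L[ℝ] Z) : contSols E A B →ₗ[ℝ] Z × Z where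
  toFun p := (E (p.1.1 0), E (p.1.1 1))
  map_add' := by intro p q; simp
  map_smul' := by intro p q; simp

/-- Averaging over windows of length `h`. -/
noncomputable def avg {V : Type} [NormedAddCommGroup V] [NormedSpace ℝ V] (h : ℝ) (f : ℝ → V)
    (t : ℝ) : V := h⁻¹ • ∫ s in t..(t + h), f s

theorem avg_continuous {V : Type} [NormedAddCommGroup V] [NormedSpace ℝ V] [CompleteSpace V]
    (h : ℝ) (f : ℝ → V)
    (hf : ∀ a b, IntervalIntegrable f volume a b) : Continuous (avg h f) := by
  have hc : Continuous fun t => ∫ s in (0:ℝ)..t, f s :=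
    intervalIntegral.continuous_primitive hf 0
  have : avg h f = fun t => h⁻¹ • ((∫ s in (0:ℝ)..(t+h), f s) - ∫ s in (0:ℝ)..t, f s) := by
    ext t
    rw [avg, intervalIntegral.integral_interval_sub_left (hf _ _) (hf _ _)]
  rw [this]
  have := hc.comp (continuous_id.add (continuous_const (y := h)))
  exact (this.sub hc).const_smul _

theorem avg_hasDerivAt {V : Type} [NormedAddCommGroup V] [NormedSpace ℝ V] [CompleteSpace V]
    (h : ℝ) (f : ℝ → V) (hf : Continuous f) (t : ℝ) :
    HasDerivAt (avg h f) (h⁻¹ • (f (t + h) - f t)) t := by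
  have hd : ∀ t, HasDerivAt (fun t => ∫ s in (0:ℝ)..t, f s) (f t) t := fun t =>
    intervalIntegral.integral_hasDerivAt_right (hf.intervalIntegrable _ _)
      (hf.stronglyMeasurableAtFilter _ _) hf.continuousAt
  have : avg h f = fun t => h⁻¹ • ((∫ s in (0:ℝ)..(t+h), f s) - ∫ s in (0:ℝ)..t, f s) := by
    ext t
    rw [avg, intervalIntegral.integral_interval_sub_left (hf.intervalIntegrable _ _)
      (hf.intervalIntegrable _ _)]
  rw [this]
  exact (((hd (t + h)).comp_add_const t h).sub (hd t)).const_smul _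

theorem avg_tendsto {V : Type} [NormedAddCommGroup V] [NormedSpace ℝ V] [CompleteSpace V]
    (f : ℝ → V) (hf : Continuous f) (t : ℝ) :
    Tendsto (fun h => avg h f t) (nhdsWithin 0 (Ioi 0)) (nhds (f t)) := by
  have hd : HasDerivAt (fun t' => ∫ s in t..t', f s) (f t) t :=
    intervalIntegral.integral_hasDerivAt_right (hf.intervalIntegrable _ _)
      (hf.stronglyMeasurableAtFilter _ _) hf.continuousAt
  have := hd.tendsto_slope_zero_right
  simpa [avg] using this

/-- Every endpoint pair of a solution is an endpoint pair of a continuous solution. -/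
theorem mem_range_ev (E A : X →L[ℝ] Z) (B : U →L[ℝ] Z) (x : ℝ → X) (u : ℝ → U)
    (hx : ∀ a b, IntervalIntegrable x volume a b) (hu : ∀ a b, IntervalIntegrable u volume a b)
    (h : ∀ t, 0 ≤ t → E (x t) = E (x 0) + ∫ s in (0:ℝ)..t, (A (x s) + B (u s)))
    (k : ℝ) (hk : 0 ≤ k) : (E (x k), E (x (k + 1))) ∈ LinearMap.range (evEnds E A B) := by
  have : CompleteSpace X := FiniteDimensional.complete ℝ X
  have : CompleteSpace U := FiniteDimensional.complete ℝ U
  have : CompleteSpace Z := FiniteDimensional.complete ℝ Z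
  set g : ℝ → Z := fun s => A (x s) + B (u s) with hg
  have hAx : ∀ a b, IntervalIntegrable (fun s => A (x s)) volume a b := fun a b =>
    ⟨A.integrable_comp (hx a b).1, A.integrable_comp (hx a b).2⟩
  have hBu : ∀ a b, IntervalIntegrable (fun s => B (u s)) volume a b := fun a b =>
    ⟨B.integrable_comp (hu a b).1, B.integrable_comp (hu a b).2⟩
  have hgi : ∀ a b, IntervalIntegrable g volume a b := fun a b => (hAx a b).add (hBu a b)
  set ζ : ℝ → Z := fun t => E (x 0) + ∫ s in (0:ℝ)..t, g s with hζ
  have hζc : Continuous ζ := continuous_const.add (intervalIntegral.continuous_primitive hgi 0)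
  have hζE : ∀ t, 0 ≤ t → E (x t) = ζ t := h
  -- the averaged solutions
  have key : ∀ η : ℝ, 0 < η → (avg η ζ k, avg η ζ (k + 1)) ∈ LinearMap.range (evEnds E A B) := by
    intro η hη
    have hxc := avg_continuous η x hx
    have huc := avg_continuous η u hu
    have hE : ∀ t, 0 ≤ t → E (avg η x t) = avg η ζ t := by
      intro t ht
      rw [avg, map_smul, ← ContinuousLinearMap.intervalIntegral_comp_comm E (hx _ _), avg]
      congr 1
      apply intervalIntegral.integral_congr
      intro s hs
      rw [uIcc_of_le (by linarith)] at hs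
      exact hζE s (ht.trans hs.1)
    have hG : ∀ t, A (avg η x t) + B (avg η u t) = η⁻¹ • (ζ (t + η) - ζ t) := by
      intro t
      rw [avg, map_smul, ← ContinuousLinearMap.intervalIntegral_comp_comm A (hx _ _), avg,
        map_smul, ← ContinuousLinearMap.intervalIntegral_comp_comm B (hu _ _), ← smul_add,
        ← intervalIntegral.integral_add (hAx _ _) (hBu _ _)]
      congr 1
      simp only [hζ, add_sub_add_left_eq_sub]
      rw [intervalIntegral.integral_interval_sub_left (hgi _ _) (hgi _ _)]
    refine ⟨⟨(⟨fun t => avg η x (t + k), hxc.comp (continuous_id.add continuous_const)⟩,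
      ⟨fun t => avg η u (t + k), huc.comp (continuous_id.add continuous_const)⟩), ?_⟩, ?_⟩
    · intro t ht
      simp only [ContinuousMap.coe_mk]
      rw [hE _ (by linarith), hE _ (by linarith)]
      simp only [hG]
      have := intervalIntegral.integral_eq_sub_of_hasDerivAt (a := 0) (b := t)
        (f := fun t => avg η ζ (t + k)) (f' := fun t => η⁻¹ • (ζ (t + k + η) - ζ (t + k)))
        (fun s _ => (avg_hasDerivAt η ζ hζc (s + k)).comp_add_const s k)
        (Continuous.intervalIntegrable (by fun_prop) _ _)
      rw [this]; abel
    · simp only [evEnds, LinearMap.coe_mk, AddHom.coe_mk, ContinuousMap.coe_mk]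
      rw [hE _ (by linarith), hE _ (by linarith), zero_add, add_comm 1 k]
  have hcl : IsClosed (LinearMap.range (evEnds E A B) : Set (Z × Z)) :=
    Submodule.closed_of_finiteDimensional _
  rw [hζE k hk, hζE (k + 1) (by linarith)]
  refine hcl.mem_of_tendsto ((avg_tendsto ζ hζc k).prodMk_nhds (avg_tendsto ζ hζc (k + 1))) ?_
  filter_upwards [self_mem_nhdsWithin] with η hη using key η hη

/-- Gluing of continuous pieces. -/
noncomputable def glue {V : Type} (f : ℕ → ℝ → V) (t : ℝ) : V := f ⌊t⌋₊ (t - ⌊t⌋₊)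

theorem glue_eq {V : Type} (f : ℕ → ℝ → V) (k : ℕ) (t : ℝ) (h1 : (k:ℝ) ≤ t) (h2 : t < k + 1) :
    glue f t = f k (t - k) := by
  have : ⌊t⌋₊ = k := (Nat.floor_eq_iff ((Nat.cast_nonneg k).trans h1)).2 ⟨h1, h2⟩
  simp [glue, this]

theorem glue_integral {V : Type} [NormedAddCommGroup V] [NormedSpace ℝ V] (f : ℕ → ℝ → V)
    (hf : ∀ k, Continuous (f k)) (k : ℕ) (t : ℝ) (h1 : (k:ℝ) ≤ t) (h2 : t ≤ k + 1) :
    IntervalIntegrable (glue f) volume k t ∧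
      ∫ s in (k:ℝ)..t, glue f s = ∫ s in (0:ℝ)..(t - k), f k s := by
  have hae : ∀ s ∈ Ioo (k:ℝ) t, f k (s - k) = glue f s := fun s hs =>
    (glue_eq f k s hs.1.le (hs.2.trans_le h2)).symm
  have hc : Continuous fun s => f k (s - k) := by fun_prop
  constructor
  · apply (hc.intervalIntegrable (μ := volume) k t).congr_uIoo
    rw [uIoo_of_le h1]
    exact hae
  · have : ∫ s in (k:ℝ)..t, glue f s = ∫ s in (k:ℝ)..t, f k (s - k) := by
      rw [intervalIntegral.integral_of_le h1, intervalIntegral.integral_of_le h1,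
        integral_Ioc_eq_integral_Ioo, integral_Ioc_eq_integral_Ioo]
      exact setIntegral_congr_fun measurableSet_Ioo fun s hs => (hae s hs).symm
    rw [this, intervalIntegral.integral_comp_sub_right (fun s => f k s), sub_self]

theorem glue_intervalIntegrable {V : Type} [NormedAddCommGroup V] [NormedSpace ℝ V]
    (f : ℕ → ℝ → V) (hf : ∀ k, Continuous (f k)) (a b : ℝ) (ha : 0 ≤ a) (hb : 0 ≤ b) :
    IntervalIntegrable (glue f) volume a b := by
  have h0 : ∀ N : ℕ, IntervalIntegrable (glue f) volume 0 N := by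
    intro N
    have := IntervalIntegrable.trans_iterate (μ := volume) (f := glue f)
      (a := fun k : ℕ => (k:ℝ)) (n := N)
      (fun k _ => by
        have := (glue_integral f hf k (k + 1) (by linarith) le_rfl).1
        exact_mod_cast this)
    simpa using this
  have h1 : ∀ a : ℝ, 0 ≤ a → IntervalIntegrable (glue f) volume 0 a := by
    intro a ha
    obtain ⟨N, hN⟩ := exists_nat_ge a
    refine (h0 N).mono_set ?_
    rw [uIcc_of_le ha, uIcc_of_le (ha.trans hN)]
    exact Icc_subset_Icc_right hN
  exact (h1 a ha).symm.trans (h1 b hb)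

theorem glue_locallyIntegrableOn {V : Type} [NormedAddCommGroup V] [NormedSpace ℝ V]
    (f : ℕ → ℝ → V) (hf : ∀ k, Continuous (f k)) : LocallyIntegrableOn (glue f) (Ici 0) := by
  rw [locallyIntegrableOn_iff isClosed_Ici.isLocallyClosed]
  intro K hK hKc
  obtain ⟨M, hM⟩ := hKc.bddAbove
  have := (glue_intervalIntegrable f hf 0 (max M 0) le_rfl (le_max_right _ _))
  rw [intervalIntegrable_iff_integrableOn_Icc_of_le (le_max_right _ _)] at this
  exact this.mono_set fun s hs => ⟨hK hs, (hM hs).trans (le_max_left _ _)⟩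

theorem abstract_main (E A : X →L[ℝ] Z) (B : U →L[ℝ] Z) (x : ℝ → X) (u : ℝ → U)
    (hx : LocallyIntegrableOn x (Ici 0)) (hu : LocallyIntegrableOn u (Ici 0))
    (h : ∀ t, 0 ≤ t → E (x t) = E (x 0) + ∫ s in (0:ℝ)..t, (A (x s) + B (u s)))
    (hlim : Tendsto (fun t => E (x t)) atTop (nhds 0)) :
    ∃ (x' : ℝ → X) (u' : ℝ → U), LocallyIntegrableOn x' (Ici 0) ∧ LocallyIntegrableOn u' (Ici 0) ∧
      (∀ t₀ ∈ Ici (0:ℝ), ∀ t ∈ Ici (0:ℝ), t₀ ≤ t →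
        E (x' t) = E (x' t₀) + ∫ s in t₀..t, (A (x' s) + B (u' s))) ∧
      E (x' 0) = E (x 0) ∧ Tendsto x' atTop (nhds 0) := by
  have : CompleteSpace Z := FiniteDimensional.complete ℝ Z
  -- endpoint pairs
  have hind : ∀ {V : Type} [NormedAddCommGroup V] (f : ℝ → V),
      LocallyIntegrableOn f (Ici 0) → ∀ a b,
        IntervalIntegrable ((Ici (0:ℝ)).indicator f) volume a b := by
    intro V _ f hf a b
    rw [intervalIntegrable_iff, integrableOn_indicator_iff measurableSet_Ici]
    refine (hf.integrableOn_compact_subset (t := Ici 0 ∩ uIcc a b) inter_subset_left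
      (isCompact_uIcc.inter_left isClosed_Ici)).mono_set ?_
    exact inter_subset_inter_right _ uIoc_subset_uIcc
  have hpair : ∀ k : ℕ, (E (x k), E (x (k + 1))) ∈ LinearMap.range (evEnds E A B) := by
    intro k
    have hi : ∀ {V : Type} [NormedAddCommGroup V] (f : ℝ → V) (t : ℝ), 0 ≤ t →
        (Ici (0:ℝ)).indicator f t = f t := fun f t ht => indicator_of_mem ht f
    have := mem_range_ev E A B _ _ (hind x hx) (hind u hu) (by
      intro t ht
      rw [hi x t ht, hi x 0 le_rfl, h t ht]
      congr 1
      apply intervalIntegral.integral_congr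
      intro s hs
      rw [uIcc_of_le ht] at hs
      simp only [hi x s hs.1, hi u s hs.1]) k (Nat.cast_nonneg k)
    rwa [hi x _ (by positivity), hi x _ (by positivity)] at this
  obtain ⟨σ, hσ⟩ := (evEnds E A B).rangeRestrict.exists_rightInverse_of_surjective
    (LinearMap.range_rangeRestrict _)
  set w : ℕ → LinearMap.range (evEnds E A B) := fun k => ⟨_, hpair k⟩ with hw
  have hσw : ∀ k, evEnds E A B (σ (w k)) = (E (x k), E (x (k + 1))) := by
    intro k
    have := congrArg Subtype.val (LinearMap.congr_fun hσ (w k))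
    simpa [hw] using this
  have hw0 : Tendsto w atTop (nhds 0) := by
    rw [tendsto_subtype_rng]
    have t1 : Tendsto (fun k : ℕ => E (x k)) atTop (nhds 0) :=
      hlim.comp tendsto_natCast_atTop_atTop
    have t2 : Tendsto (fun k : ℕ => E (x (k + 1))) atTop (nhds 0) :=
      hlim.comp (tendsto_atTop_add_const_right _ _ tendsto_natCast_atTop_atTop)
    exact t1.prodMk_nhds t2
  let L : LinearMap.range (evEnds E A B) →ₗ[ℝ] C(ℝ, X) :=
    (LinearMap.fst ℝ _ _) ∘ₗ (contSols E A B).subtype ∘ₗ σ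
  have hL : Tendsto (fun k => L (w k)) atTop (nhds 0) := by
    have := (L.continuous_of_finiteDimensional.tendsto 0).comp hw0
    rwa [map_zero] at this
  set fx : ℕ → ℝ → X := fun k => (σ (w k)).1.1 with hfx
  set fu : ℕ → ℝ → U := fun k => (σ (w k)).1.2 with hfu
  have hfxc : ∀ k, Continuous (fx k) := fun k => (σ (w k)).1.1.continuous
  have hfuc : ∀ k, Continuous (fu k) := fun k => (σ (w k)).1.2.continuous
  have hsol : ∀ k t, 0 ≤ t →
      E (fx k t) = E (fx k 0) + ∫ s in (0:ℝ)..t, (A (fx k s) + B (fu k s)) :=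
    fun k => (σ (w k)).2
  have hE0 : ∀ k, E (fx k 0) = E (x k) := fun k => congrArg Prod.fst (hσw k)
  have hE1 : ∀ k, E (fx k 1) = E (x (k + 1)) := fun k => congrArg Prod.snd (hσw k)
  set fg : ℕ → ℝ → Z := fun k s => A (fx k s) + B (fu k s) with hfg
  have hfgc : ∀ k, Continuous (fg k) := fun k => by
    have := hfxc k
    have := hfuc k
    fun_prop
  have hgg : ∀ s, A (glue fx s) + B (glue fu s) = glue fg s := fun s => rfl
  have hgN : ∀ k : ℕ, E (glue fx k) = E (x k) := by
    intro k
    rw [glue_eq fx k k le_rfl (by linarith), sub_self, hE0]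
  have hstep : ∀ (k : ℕ) (t : ℝ), (k:ℝ) ≤ t → t ≤ k + 1 →
      E (glue fx t) = E (glue fx k) + ∫ s in (k:ℝ)..t, glue fg s := by
    intro k t h1 h2
    rw [(glue_integral fg hfgc k t h1 h2).2, hgN, ← hE0, ← hsol k _ (by linarith)]
    rcases h2.lt_or_eq with h2 | h2
    · rw [glue_eq fx k t h1 h2]
    · have := hgN (k + 1)
      push_cast at this
      rw [h2, this, ← hE1]
      congr 2; ring
  have hI : ∀ a b, 0 ≤ a → 0 ≤ b → IntervalIntegrable (glue fg) volume a b :=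
    glue_intervalIntegrable fg hfgc
  have hnat : ∀ k : ℕ, E (glue fx k) = E (glue fx 0) + ∫ s in (0:ℝ)..k, glue fg s := by
    intro k
    induction k with
    | zero => simp
    | succ k ih =>
      have := hstep k (k + 1) (by linarith) le_rfl
      push_cast
      rw [this, ih, add_assoc, intervalIntegral.integral_add_adjacent_intervals
        (hI _ _ le_rfl (by positivity)) (hI _ _ (by positivity) (by positivity))]
  have hall : ∀ t, 0 ≤ t → E (glue fx t) = E (glue fx 0) + ∫ s in (0:ℝ)..t, glue fg s := by
    intro t ht
    rw [hstep ⌊t⌋₊ t (Nat.floor_le ht) (Nat.lt_floor_add_one t).le, hnat, add_assoc,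
      intervalIntegral.integral_add_adjacent_intervals
        (hI _ _ le_rfl (by positivity)) (hI _ _ (by positivity) ht)]
  refine ⟨glue fx, glue fu, glue_locallyIntegrableOn fx hfxc, glue_locallyIntegrableOn fu hfuc,
    ?_, ?_, ?_⟩
  · intro t₀ ht₀ t ht _
    simp only [hgg]
    rw [hall t ht, hall t₀ ht₀, add_assoc, intervalIntegral.integral_add_adjacent_intervals
        (hI _ _ le_rfl ht₀) (hI _ _ ht₀ ht)]
  · simpa using hgN 0
  · rw [ContinuousMap.tendsto_iff_forall_isCompact_tendstoUniformlyOn] at hL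
    have hU := hL (Icc 0 1) isCompact_Icc
    rw [Metric.tendstoUniformlyOn_iff] at hU
    rw [Metric.tendsto_nhds]
    intro ε hε
    have hfl : Tendsto (fun t : ℝ => ⌊t⌋₊) atTop atTop := tendsto_nat_floor_atTop
    filter_upwards [hfl.eventually (hU ε hε), eventually_ge_atTop 0] with t ht h0
    have := ht (t - ⌊t⌋₊) ⟨by linarith [Nat.floor_le h0], by linarith [Nat.lt_floor_add_one t]⟩
    rw [dist_comm]
    exact this

end Aux

/-- Corollary (equivalent stabilizability notions): the DAE is behaviorally stabilizable
from `z` iff some solution on `[0,∞)` with `Ex(0) = z` satisfies `Ex(t) → 0`. -/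
theorem behaviorally_stabilizable_iff_Ex_tendsto_zero {c n m : ℕ}
    (E A : Matrix (Fin c) (Fin n) ℝ) (B : Matrix (Fin c) (Fin m) ℝ)
    (z : Fin c → ℝ) (hz : z ∈ ConsistencySet E A B) :
    (∃ x u, IsDAESolution E A B (Set.Ici 0) x u ∧ E.mulVec (x 0) = z ∧
        Tendsto x atTop (nhds 0)) ↔
      (∃ x u, IsDAESolution E A B (Set.Ici 0) x u ∧ E.mulVec (x 0) = z ∧
        Tendsto (fun t => E.mulVec (x t)) atTop (nhds 0)) := by
  constructor
  · rintro ⟨x, u, h, h0, hl⟩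
    refine ⟨x, u, h, h0, ?_⟩
    have hc : Continuous fun v : Fin n → ℝ => E.mulVec v :=
      continuous_const.matrix_mulVec continuous_id
    have := (hc.tendsto 0).comp hl
    rwa [Matrix.mulVec_zero] at this
  · rintro ⟨x, u, ⟨hx, hu, h⟩, h0, hl⟩
    obtain ⟨x', u', hx', hu', h', h0', hl'⟩ := abstract_main
      (LinearMap.toContinuousLinearMap E.mulVecLin) (LinearMap.toContinuousLinearMap A.mulVecLin)
      (LinearMap.toContinuousLinearMap B.mulVecLin) x u hx hu
      (fun t ht => h 0 self_mem_Ici t ht ht) hl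
    exact ⟨x', u', ⟨hx', hu', h'⟩, h0'.trans h0, hl'⟩
end

section
/- Let (A_g, B_g, C_g, D_g) be a stabilizable ODE-LTI associated with the DAE d(Ex)/dt = Ax + Bu, with Q > 0, R > 0 symmetric and S = diag(Q,R). Then the algebraic Riccati equation 0 = PA_g + A_g^T P − K^T(D_g^T S D_g)K + C_g^T S C_g, with K = (D_g^T S D_g)⁻¹(B_g^T P + D_g^T S C_g) when D_g ≠ 0 (and K = 0 when D_g = 0, in which case B_g = 0), has a unique symmetric positive definite solution P, and the matrix A_g − B_g K is Hurwitz (all eigenvalues have negative real part). -/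
open Matrix

/-- A real square matrix is Hurwitz if all its complex eigenvalues have negative real
part. -/
def IsHurwitz {l : ℕ} (M : Matrix (Fin l) (Fin l) ℝ) : Prop :=
  ∀ μ ∈ spectrum ℂ (M.map (algebraMap ℝ ℂ)), μ.re < 0

open Classical in
/-- The gain `K` associated with `P` in the algebraic Riccati equation: zero if
`D_g = 0`, and `(D_gᵀ S D_g)⁻¹ (B_gᵀ P + D_gᵀ S C_g)` otherwise. -/
noncomputable def riccatiGain {n m l k : ℕ}
    (Bg : Matrix (Fin l) (Fin k) ℝ) (Cg : Matrix (Fin n ⊕ Fin m) (Fin l) ℝ)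
    (Dg : Matrix (Fin n ⊕ Fin m) (Fin k) ℝ)
    (S : Matrix (Fin n ⊕ Fin m) (Fin n ⊕ Fin m) ℝ)
    (P : Matrix (Fin l) (Fin l) ℝ) : Matrix (Fin k) (Fin l) ℝ :=
  if Dg = 0 then 0 else (Dgᵀ * S * Dg)⁻¹ * (Bgᵀ * P + Dgᵀ * S * Cg)

/-- The algebraic Riccati equation
`0 = P A_g + A_gᵀ P − Kᵀ (D_gᵀ S D_g) K + C_gᵀ S C_g`. -/
def SatisfiesARE {n m l k : ℕ} (Ag : Matrix (Fin l) (Fin l) ℝ)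
    (Bg : Matrix (Fin l) (Fin k) ℝ) (Cg : Matrix (Fin n ⊕ Fin m) (Fin l) ℝ)
    (Dg : Matrix (Fin n ⊕ Fin m) (Fin k) ℝ)
    (S : Matrix (Fin n ⊕ Fin m) (Fin n ⊕ Fin m) ℝ)
    (P : Matrix (Fin l) (Fin l) ℝ) : Prop :=
  0 = P * Ag + Agᵀ * P -
      (riccatiGain Bg Cg Dg S P)ᵀ * (Dgᵀ * S * Dg) * riccatiGain Bg Cg Dg S P +
      Cgᵀ * S * Cg

open Filter Topology

theorem are_dot_transpose {a b : Type*} [Fintype a] [Fintype b] (M : Matrix a b ℝ)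
    (x : b → ℝ) (y : a → ℝ) : x ⬝ᵥ (Mᵀ *ᵥ y) = y ⬝ᵥ (M *ᵥ x) := by
  rw [dotProduct_mulVec, vecMul_transpose, dotProduct_comm]

theorem are_mem_spectrum {l : ℕ} (M : Matrix (Fin l) (Fin l) ℂ) (μ : ℂ) :
    μ ∈ spectrum ℂ M ↔ ∃ v ≠ 0, M *ᵥ v = μ • v := by
  rw [spectrum.mem_iff, Matrix.isUnit_iff_isUnit_det, isUnit_iff_ne_zero, not_not,
    ← Matrix.exists_mulVec_eq_zero_iff]
  refine exists_congr fun v => and_congr_right fun _ => ?_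
  rw [Matrix.sub_mulVec, sub_eq_zero, Matrix.algebraMap_eq_diagonal]
  constructor
  · intro h; rw [← h]; ext i; simp [mulVec_diagonal]
  · intro h; rw [h]; ext i; simp [mulVec_diagonal]

/-- Converse Lyapunov. -/
theorem are_hurwitz_of_lyap {l : ℕ} (A P : Matrix (Fin l) (Fin l) ℝ) (hP : P.IsSymm)
    (hPp : ∀ x ≠ 0, 0 < x ⬝ᵥ P *ᵥ x)
    (hL : ∀ x ≠ 0, x ⬝ᵥ (P * A + Aᵀ * P) *ᵥ x < 0) : IsHurwitz A := by
  intro μ hμ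
  obtain ⟨v, hv0, hv⟩ := (are_mem_spectrum _ _).1 hμ
  set a : Fin l → ℝ := fun i => (v i).re with ha
  set b : Fin l → ℝ := fun i => (v i).im with hb
  have hA1 : A *ᵥ a = μ.re • a - μ.im • b := by
    ext i
    have := congrArg Complex.re (congrFun hv i)
    simpa [mulVec, dotProduct, ha, hb] using this
  have hA2 : A *ᵥ b = μ.im • a + μ.re • b := by
    ext i
    have := congrArg Complex.im (congrFun hv i)
    simp [mulVec, dotProduct, ha, hb] at this ⊢
    linarith
  have key : ∀ x, x ⬝ᵥ (P * A + Aᵀ * P) *ᵥ x = 2 * (x ⬝ᵥ P *ᵥ (A *ᵥ x)) := by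
    intro x
    rw [add_mulVec, dotProduct_add, ← mulVec_mulVec, ← mulVec_mulVec, are_dot_transpose]
    have : (A *ᵥ x) ⬝ᵥ P *ᵥ x = x ⬝ᵥ P *ᵥ (A *ᵥ x) := by
      conv_lhs => rw [← hP.eq]
      rw [are_dot_transpose]
    rw [dotProduct_comm] at this
    linarith
  have hsym : a ⬝ᵥ P *ᵥ b = b ⬝ᵥ P *ᵥ a := by
    conv_lhs => rw [← hP.eq]
    rw [are_dot_transpose]
  have hab : a ≠ 0 ∨ b ≠ 0 := by
    by_contra! h
    apply hv0
    ext i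
    exact Complex.ext (congrFun h.1 i) (congrFun h.2 i)
  have ka := key a
  have kb := key b
  rw [hA1] at ka
  rw [hA2] at kb
  simp only [mulVec_sub, mulVec_add, mulVec_smul, dotProduct_sub, dotProduct_add,
    dotProduct_smul, smul_eq_mul] at ka kb
  have hsum : a ⬝ᵥ (P * A + Aᵀ * P) *ᵥ a + b ⬝ᵥ (P * A + Aᵀ * P) *ᵥ b
      = 2 * μ.re * (a ⬝ᵥ P *ᵥ a + b ⬝ᵥ P *ᵥ b) := by
    rw [ka, kb, hsym]; ring
  have n1 : ∀ x, 0 ≤ x ⬝ᵥ P *ᵥ x := fun x => by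
    by_cases h : x = 0
    · simp [h]
    · exact (hPp x h).le
  have n2 : ∀ x, x ⬝ᵥ (P * A + Aᵀ * P) *ᵥ x ≤ 0 := fun x => by
    by_cases h : x = 0
    · simp [h]
    · exact (hL x h).le
  have h1 : 0 < a ⬝ᵥ P *ᵥ a + b ⬝ᵥ P *ᵥ b := by
    rcases hab with h | h
    · linarith [hPp a h, n1 b]
    · linarith [hPp b h, n1 a]
  have h2 : a ⬝ᵥ (P * A + Aᵀ * P) *ᵥ a + b ⬝ᵥ (P * A + Aᵀ * P) *ᵥ b < 0 := by
    rcases hab with h | h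
    · linarith [hL a h, n2 b]
    · linarith [hL b h, n2 a]
  by_contra! hc
  nlinarith [mul_nonneg hc h1.le]

section
attribute [local instance] Matrix.linftyOpNormedRing Matrix.linftyOpNormedAlgebra

theorem are_pow_tendsto {l : ℕ} (T : Matrix (Fin l) (Fin l) ℂ)
    (hT : ∀ μ ∈ spectrum ℂ T, ‖μ‖ < 1) (i j : Fin l) :
    Tendsto (fun k : ℕ => (T ^ k) i j) atTop (𝓝 0) := by
  have : Nonempty (Fin l) := ⟨i⟩
  have h1 : spectralRadius ℂ T < ((1 : NNReal) : ENNReal) :=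
    spectrum.spectralRadius_lt_of_forall_lt T (fun μ hμ => by
      rw [← NNReal.coe_lt_coe]; simpa using hT μ hμ)
  obtain ⟨r, hr1, hr2⟩ := ENNReal.lt_iff_exists_nnreal_btwn.1 h1
  have hG := spectrum.pow_nnnorm_pow_one_div_tendsto_nhds_spectralRadius T
  have hev := hG.eventually (gt_mem_nhds hr1)
  have hr2' : r < 1 := by exact_mod_cast hr2
  have hnorm : Tendsto (fun k : ℕ => ‖T ^ k‖) atTop (𝓝 0) := by
    refine squeeze_zero' (Eventually.of_forall fun _ => norm_nonneg _) ?_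
      (tendsto_pow_atTop_nhds_zero_of_lt_one r.coe_nonneg (by exact_mod_cast hr2'))
    filter_upwards [hev, eventually_gt_atTop 0] with k hk hk0
    have hk' : (0 : ℝ) < k := by exact_mod_cast hk0
    have := ENNReal.rpow_le_rpow hk.le hk'.le
    rw [← ENNReal.rpow_mul, one_div, inv_mul_cancel₀ hk'.ne', ENNReal.rpow_one,
      ENNReal.rpow_natCast] at this
    have h3 : ‖T ^ k‖₊ ≤ r ^ k := by exact_mod_cast this
    exact_mod_cast h3
  refine squeeze_zero_norm (fun k => ?_) hnorm
  have hh : ‖(T ^ k) i j‖₊ ≤ ‖T ^ k‖₊ := by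
    rw [Matrix.linfty_opNNNorm_def]
    calc ‖(T ^ k) i j‖₊ ≤ ∑ j, ‖(T ^ k) i j‖₊ :=
          Finset.single_le_sum (f := fun j => ‖(T ^ k) i j‖₊) (fun _ _ => zero_le) (Finset.mem_univ j)
      _ ≤ _ := Finset.le_sup (f := fun i => ∑ j, ‖(T ^ k) i j‖₊) (Finset.mem_univ i)
  exact_mod_cast hh
end

theorem are_det_ne_zero {l : ℕ} (A : Matrix (Fin l) (Fin l) ℝ) (hA : IsHurwitz A) :
    IsUnit (1 - A).det := by
  rw [isUnit_iff_ne_zero]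
  intro h
  obtain ⟨v, hv0, hv⟩ := Matrix.exists_mulVec_eq_zero_iff.2 h
  have : (1 : ℂ) ∈ spectrum ℂ (A.map (algebraMap ℝ ℂ)) := by
    rw [are_mem_spectrum]
    refine ⟨fun i => (v i : ℂ), ?_, ?_⟩
    · intro h; apply hv0; ext i; simpa using congrFun h i
    · rw [sub_mulVec, one_mulVec, sub_eq_zero] at hv
      ext i
      have := congrFun hv i
      have h2 := congrArg (fun t : ℝ => (t : ℂ)) this
      simp [mulVec, dotProduct] at h2 ⊢
      exact h2.symm
  have := hA _ this
  norm_num at this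

/-- Cayley transform. -/
theorem are_cayley {l : ℕ} (A : Matrix (Fin l) (Fin l) ℝ) (hA : IsHurwitz A) :
    ∃ T : Matrix (Fin l) (Fin l) ℝ, T * (1 - A) = 1 + A ∧
      Tendsto (fun k : ℕ => T ^ k) atTop (𝓝 0) := by
  have hu := are_det_ne_zero A hA
  have hJ : (1 - A)⁻¹ * (1 - A) = 1 := Matrix.nonsing_inv_mul _ hu
  have hT : (1 + A) * (1 - A)⁻¹ * (1 - A) = 1 + A := by rw [Matrix.mul_assoc, hJ, Matrix.mul_one]
  refine ⟨(1 + A) * (1 - A)⁻¹, hT, ?_⟩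
  set T := (1 + A) * (1 - A)⁻¹ with hTdef
  have hJ' : (1 - A) * (1 - A)⁻¹ = 1 := Matrix.mul_nonsing_inv _ hu
  have hpow := are_pow_tendsto (T.map (algebraMap ℝ ℂ)) (by
    intro μ hμ
    obtain ⟨v, hv0, hv⟩ := (are_mem_spectrum _ _).1 hμ
    set J := ((1 - A)⁻¹).map (algebraMap ℝ ℂ)
    set w := J *ᵥ v with hw
    set AC := A.map (algebraMap ℝ ℂ) with hAC
    have hv' : v = (1 - AC) *ᵥ w := by
      have : (1 - AC) * J = 1 := by
        have := congrArg (fun M => M.map (algebraMap ℝ ℂ)) hJ'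
        simp only [Matrix.map_mul] at this
        rw [Matrix.map_sub _ (by simp)] at this
        simpa [hAC, J] using this
      rw [hw, mulVec_mulVec, this, one_mulVec]
    have hTw : (1 + AC) *ᵥ w = μ • v := by
      rw [← hv]
      have : T.map (algebraMap ℝ ℂ) = (1 + AC) * J := by
        rw [hTdef, Matrix.map_mul, Matrix.map_add _ (by simp)]; simp [hAC, J]
      rw [this, hw, mulVec_mulVec]
    have hw0 : w ≠ 0 := by
      intro h; apply hv0; rw [hv', h, mulVec_zero]
    have e : (μ + 1) • (AC *ᵥ w) = (μ - 1) • w := by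
      rw [hv', add_mulVec, sub_mulVec, one_mulVec] at hTw
      ext i
      have := congrFun hTw i
      simp at this ⊢
      linear_combination this
    have hne : μ + 1 ≠ 0 := by
      intro h
      rw [h, zero_smul] at e
      have h2 : μ - 1 = -2 := by linear_combination h
      rw [h2] at e
      apply hw0
      have := (smul_eq_zero.1 e.symm)
      simpa using this
    have hs : (μ - 1) / (μ + 1) ∈ spectrum ℂ AC := by
      rw [are_mem_spectrum]
      refine ⟨w, hw0, ?_⟩
      rw [div_eq_inv_mul, mul_smul, ← e, smul_smul, inv_mul_cancel₀ hne, one_smul]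
    have := hA _ hs
    rw [Complex.div_re, ← add_div] at this
    have hpos : 0 < Complex.normSq (μ + 1) := Complex.normSq_pos.2 hne
    rw [div_lt_iff₀ hpos] at this
    simp at this
    have h3 : ‖μ‖ ^ 2 < 1 := by
      rw [Complex.sq_norm, Complex.normSq_apply]; nlinarith
    nlinarith [norm_nonneg μ])
  refine tendsto_pi_nhds.2 fun i => tendsto_pi_nhds.2 fun j => ?_
  have h := hpow i j
  have : ∀ k : ℕ, (T.map (algebraMap ℝ ℂ) ^ k) i j = (((T ^ k) i j : ℝ) : ℂ) := by
    intro k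
    rw [← Matrix.map_pow]; simp
  simp only [this] at h
  have h2 := (Complex.continuous_re.tendsto _).comp h
  simpa [Function.comp_def] using h2

theorem are_stein {l : ℕ} (A : Matrix (Fin l) (Fin l) ℝ) (hA : IsHurwitz A) :
    ∃ T J : Matrix (Fin l) (Fin l) ℝ, Tendsto (fun k : ℕ => T ^ k) atTop (𝓝 0) ∧
      ∀ Y, Tᵀ * Y * T - Y = (2 : ℝ) • (Jᵀ * (Y * A + Aᵀ * Y) * J) := by
  obtain ⟨T, hT, hlim⟩ := are_cayley A hA
  have hu := are_det_ne_zero A hA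
  have hJ' : (1 - A) * (1 - A)⁻¹ = 1 := Matrix.mul_nonsing_inv _ hu
  refine ⟨T, (1 - A)⁻¹, hlim, fun Y => ?_⟩
  set J := (1 - A)⁻¹
  have hTJ : T = (1 + A) * J := by rw [← hT, Matrix.mul_assoc, hJ', Matrix.mul_one]
  have hJt : Jᵀ * (1 - A)ᵀ = 1 := by rw [← transpose_mul, hJ', transpose_one]
  have e : (1 + A)ᵀ * Y * (1 + A) - (1 - A)ᵀ * Y * (1 - A) = (2 : ℝ) • (Y * A + Aᵀ * Y) := by
    rw [two_smul, transpose_add, transpose_sub, transpose_one]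
    noncomm_ring
  have e2 : Y = Jᵀ * ((1 - A)ᵀ * Y * (1 - A)) * J := by
    calc Y = (Jᵀ * (1 - A)ᵀ) * Y * ((1 - A) * J) := by rw [hJt, hJ']; simp
      _ = _ := by noncomm_ring
  conv_lhs => rw [e2, hTJ]
  rw [← Matrix.smul_mul, ← Matrix.mul_smul, ← e, transpose_mul]
  have e3 : Jᵀ * ((1 - A)ᵀ * Y * (1 - A)) * J = Y := e2.symm
  rw [e3, Matrix.mul_sub, Matrix.sub_mul, e3]
  congr 1
  noncomm_ring

theorem are_lyap_nonneg {l : ℕ} (A Y : Matrix (Fin l) (Fin l) ℝ) (hA : IsHurwitz A)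
    (hY : ∀ x, x ⬝ᵥ (Y * A + Aᵀ * Y) *ᵥ x ≤ 0) (x : Fin l → ℝ) : 0 ≤ x ⬝ᵥ Y *ᵥ x := by
  obtain ⟨T, J, hlim, hst⟩ := are_stein A hA
  have hdec : ∀ y, (T *ᵥ y) ⬝ᵥ Y *ᵥ (T *ᵥ y) ≤ y ⬝ᵥ Y *ᵥ y := by
    intro y
    have h := congrArg (fun M => y ⬝ᵥ M *ᵥ y) (hst Y)
    simp only [sub_mulVec, dotProduct_sub, smul_mulVec, dotProduct_smul, smul_eq_mul,
      ← mulVec_mulVec, are_dot_transpose] at h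
    have h2 := hY (J *ᵥ y)
    rw [dotProduct_comm, dotProduct_comm _ (J *ᵥ y)] at h
    linarith
  have hall : ∀ k : ℕ, ((T ^ k) *ᵥ x) ⬝ᵥ Y *ᵥ ((T ^ k) *ᵥ x) ≤ x ⬝ᵥ Y *ᵥ x := by
    intro k
    induction k with
    | zero => simp
    | succ k ih =>
      rw [pow_succ', ← mulVec_mulVec]
      exact (hdec _).trans ih
  have hc : Continuous fun M : Matrix (Fin l) (Fin l) ℝ => (M *ᵥ x) ⬝ᵥ Y *ᵥ (M *ᵥ x) := by
    fun_prop
  have h := (hc.tendsto 0).comp hlim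
  simp only [zero_mulVec, mulVec_zero, dotProduct_zero] at h
  exact le_of_tendsto' h hall

theorem are_lyap_inj {l : ℕ} (A Y : Matrix (Fin l) (Fin l) ℝ) (hA : IsHurwitz A)
    (hY : Y * A + Aᵀ * Y = 0) : Y = 0 := by
  obtain ⟨T, J, hlim, hst⟩ := are_stein A hA
  have h := hst Y
  rw [hY] at h
  simp only [Matrix.mul_zero, Matrix.zero_mul, smul_zero, sub_eq_zero] at h
  have hall : ∀ k : ℕ, (T ^ k)ᵀ * Y * T ^ k = Y := by
    intro k
    induction k with
    | zero => simp
    | succ k ih =>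
      calc (T ^ (k + 1))ᵀ * Y * T ^ (k + 1) = (T ^ k)ᵀ * (Tᵀ * Y * T) * T ^ k := by
            rw [pow_succ', transpose_mul]; noncomm_ring
        _ = Y := by rw [h, ih]
  have hc : Continuous fun M : Matrix (Fin l) (Fin l) ℝ => Mᵀ * Y * M := by
    fun_prop
  have h := (hc.tendsto 0).comp hlim
  simp only [Function.comp_def, hall, Matrix.mul_zero] at h
  exact tendsto_nhds_unique tendsto_const_nhds h

theorem are_lyap_exists {l : ℕ} (A N : Matrix (Fin l) (Fin l) ℝ) (hA : IsHurwitz A)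
    (hN : N.IsSymm) : ∃ X : Matrix (Fin l) (Fin l) ℝ, X.IsSymm ∧ X * A + Aᵀ * X + N = 0 := by
  let f : Matrix (Fin l) (Fin l) ℝ →ₗ[ℝ] Matrix (Fin l) (Fin l) ℝ :=
    LinearMap.mulRight ℝ A + LinearMap.mulLeft ℝ Aᵀ
  have hf : ∀ X, f X = X * A + Aᵀ * X := fun X => rfl
  have hinj : Function.Injective f := by
    rw [injective_iff_map_eq_zero]
    intro X hX
    exact are_lyap_inj A X hA hX
  obtain ⟨X, hX⟩ := (LinearMap.injective_iff_surjective.1 hinj) (-N)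
  refine ⟨X, ?_, by rw [← hf, hX]; simp⟩
  apply hinj
  rw [hX, ← hN.eq, ← transpose_neg, ← hX, hf, hf]
  simp [transpose_add, transpose_mul, add_comm]

section main
variable {ι : Type*} [Fintype ι] {l k : ℕ}

/-- Closed-loop Lyapunov expression. -/
def areLyap (A : Matrix (Fin l) (Fin l) ℝ) (B : Matrix (Fin l) (Fin k) ℝ)
    (C : Matrix ι (Fin l) ℝ) (D : Matrix ι (Fin k) ℝ) (S : Matrix ι ι ℝ)
    (F : Matrix (Fin k) (Fin l) ℝ) (P : Matrix (Fin l) (Fin l) ℝ) : Matrix (Fin l) (Fin l) ℝ :=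
  P * (A - B * F) + (A - B * F)ᵀ * P + (C - D * F)ᵀ * S * (C - D * F)

theorem are_identity (A : Matrix (Fin l) (Fin l) ℝ) (B : Matrix (Fin l) (Fin k) ℝ)
    (C : Matrix ι (Fin l) ℝ) (D : Matrix ι (Fin k) ℝ) (S : Matrix ι ι ℝ) (hS : S.IsSymm)
    (F K : Matrix (Fin k) (Fin l) ℝ) (P : Matrix (Fin l) (Fin l) ℝ) (hP : P.IsSymm)
    (hK : (Dᵀ * S * D) * K = Bᵀ * P + Dᵀ * S * C) :
    areLyap A B C D S F P = (P * A + Aᵀ * P - Kᵀ * (Dᵀ * S * D) * K + Cᵀ * S * C)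
      + (F - K)ᵀ * (Dᵀ * S * D) * (F - K) := by
  have h1 := congrArg (fun M => Fᵀ * M) hK
  have h2 := congrArg (fun M => Mᵀ * F) hK
  simp only [transpose_mul, transpose_add, transpose_transpose, hS.eq, hP.eq,
    Matrix.mul_add, Matrix.add_mul, Matrix.mul_assoc] at h1 h2
  simp only [areLyap, transpose_mul, transpose_sub, Matrix.mul_sub, Matrix.sub_mul,
    Matrix.mul_assoc]
  linear_combination (norm := module) h1 + h2

theorem are_abstract (A : Matrix (Fin l) (Fin l) ℝ) (B : Matrix (Fin l) (Fin k) ℝ)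
    (C : Matrix ι (Fin l) ℝ) (D : Matrix ι (Fin k) ℝ) (S : Matrix ι ι ℝ) (hS : S.IsSymm)
    (hS0 : ∀ x, 0 ≤ x ⬝ᵥ S *ᵥ x)
    (V : Matrix (Fin k) (Fin k) ℝ)
    (hV : ∀ P : Matrix (Fin l) (Fin l) ℝ, (Dᵀ * S * D) * (V * (Bᵀ * P + Dᵀ * S * C)) = Bᵀ * P + Dᵀ * S * C)
    (hM : ∀ F : Matrix (Fin k) (Fin l) ℝ, ∀ x ≠ 0,
      0 < x ⬝ᵥ ((C - D * F)ᵀ * S * (C - D * F)) *ᵥ x)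
    (F₀ : Matrix (Fin k) (Fin l) ℝ) (hF₀ : IsHurwitz (A - B * F₀)) :
    ∃ P : Matrix (Fin l) (Fin l) ℝ, (P.IsSymm ∧ (∀ x ≠ 0, 0 < x ⬝ᵥ P *ᵥ x) ∧
      P * A + Aᵀ * P - (V * (Bᵀ * P + Dᵀ * S * C))ᵀ * (Dᵀ * S * D) *
        (V * (Bᵀ * P + Dᵀ * S * C)) + Cᵀ * S * C = 0 ∧
      IsHurwitz (A - B * (V * (Bᵀ * P + Dᵀ * S * C)))) ∧
      ∀ P' : Matrix (Fin l) (Fin l) ℝ, P'.IsSymm → (∀ x ≠ 0, 0 < x ⬝ᵥ P' *ᵥ x) →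
        P' * A + Aᵀ * P' - (V * (Bᵀ * P' + Dᵀ * S * C))ᵀ * (Dᵀ * S * D) *
        (V * (Bᵀ * P' + Dᵀ * S * C)) + Cᵀ * S * C = 0 → P' = P := by
  set κ : Matrix (Fin l) (Fin l) ℝ → Matrix (Fin k) (Fin l) ℝ :=
    fun P => V * (Bᵀ * P + Dᵀ * S * C) with hκ
  set ric : Matrix (Fin l) (Fin l) ℝ → Matrix (Fin l) (Fin l) ℝ :=
    fun P => P * A + Aᵀ * P - (κ P)ᵀ * (Dᵀ * S * D) * κ P + Cᵀ * S * C with hric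
  change ∃ P : Matrix (Fin l) (Fin l) ℝ, (P.IsSymm ∧ (∀ x ≠ 0, 0 < x ⬝ᵥ P *ᵥ x) ∧
      ric P = 0 ∧ IsHurwitz (A - B * κ P)) ∧
      ∀ P' : Matrix (Fin l) (Fin l) ℝ, P'.IsSymm → (∀ x ≠ 0, 0 < x ⬝ᵥ P' *ᵥ x) →
        ric P' = 0 → P' = P
  have hid : ∀ P, P.IsSymm → ∀ F, areLyap A B C D S F P
      = ric P + (F - κ P)ᵀ * (Dᵀ * S * D) * (F - κ P) :=
    fun P hP F => are_identity A B C D S hS F (κ P) P hP (hV P)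
  have hidK : ∀ P, P.IsSymm → areLyap A B C D S (κ P) P = ric P := by
    intro P hP; rw [hid P hP]; simp
  have hW : ∀ (G : Matrix (Fin k) (Fin l) ℝ) x, 0 ≤ x ⬝ᵥ (Gᵀ * (Dᵀ * S * D) * G) *ᵥ x := by
    intro G x
    have := hS0 (D *ᵥ (G *ᵥ x))
    simp only [← mulVec_mulVec, are_dot_transpose]
    rw [dotProduct_comm, are_dot_transpose, dotProduct_comm]
    exact this
  -- comparison
  have hcomp : ∀ F X Y, IsHurwitz (A - B * F) → areLyap A B C D S F X = 0 →
      (∀ x, 0 ≤ x ⬝ᵥ (areLyap A B C D S F Y) *ᵥ x) → ∀ x, x ⬝ᵥ Y *ᵥ x ≤ x ⬝ᵥ X *ᵥ x := by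
    intro F X Y hF hX hY x
    have := are_lyap_nonneg (A - B * F) (X - Y) hF (by
      intro y
      have e : (X - Y) * (A - B * F) + (A - B * F)ᵀ * (X - Y)
          = areLyap A B C D S F X - areLyap A B C D S F Y := by
        simp only [areLyap, Matrix.mul_sub (A - B * F)ᵀ, Matrix.sub_mul X Y]; abel
      rw [e, hX, zero_sub, neg_mulVec, dotProduct_neg]
      linarith [hY y]) x
    rw [sub_mulVec, dotProduct_sub] at this
    linarith
  -- nonnegative sub-solutions are positive and stabilizing
  have hposs : ∀ F P, P.IsSymm → (∀ x, 0 ≤ x ⬝ᵥ P *ᵥ x) →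
      (∀ x, x ⬝ᵥ (areLyap A B C D S F P) *ᵥ x ≤ 0) → (∀ x ≠ 0, 0 < x ⬝ᵥ P *ᵥ x) →
      IsHurwitz (A - B * F) := by
    intro F P hP _ hle hpos
    refine are_hurwitz_of_lyap _ P hP hpos (fun x hx => ?_)
    have h1 := hle x
    rw [areLyap, add_mulVec, dotProduct_add] at h1
    linarith [hM F x hx]
  have hpd : ∀ F P, P.IsSymm → (∀ x, 0 ≤ x ⬝ᵥ P *ᵥ x) → areLyap A B C D S F P = 0 →
      ∀ x ≠ 0, 0 < x ⬝ᵥ P *ᵥ x := by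
    intro F P hP h0 hL x hx
    have hpsd : P.PosSemidef := PosSemidef.of_dotProduct_mulVec_nonneg
      (by rw [IsHermitian, conjTranspose_eq_transpose_of_trivial]; exact hP)
      (fun x => by simpa using h0 x)
    refine lt_of_le_of_ne (h0 x) (fun h => ?_)
    have hPx : P *ᵥ x = 0 := (hpsd.dotProduct_mulVec_zero_iff x).1 (by simpa using h.symm)
    have h1 : x ⬝ᵥ (areLyap A B C D S F P) *ᵥ x = 0 := by rw [hL]; simp
    have h2 := hM F x hx
    rw [areLyap, add_mulVec, dotProduct_add, add_mulVec, dotProduct_add, ← mulVec_mulVec,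
      ← mulVec_mulVec, hPx] at h1
    have h3 : x ⬝ᵥ P *ᵥ ((A - B * F) *ᵥ x) = 0 := by
      rw [← hP.eq, are_dot_transpose, hPx]; simp
    rw [h3] at h1
    simp only [mulVec_zero, dotProduct_zero] at h1
    linarith
  -- Kleinman iteration
  let Good : Matrix (Fin l) (Fin l) ℝ → Prop := fun P => P.IsSymm ∧ (∀ x, 0 ≤ x ⬝ᵥ P *ᵥ x) ∧
    ∃ F, areLyap A B C D S F P = 0
  have hsolve : ∀ F, IsHurwitz (A - B * F) → ∃ X, Good X ∧ areLyap A B C D S F X = 0 := by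
    intro F hF
    obtain ⟨X, hX, hXe⟩ := are_lyap_exists (A - B * F) ((C - D * F)ᵀ * S * (C - D * F)) hF (by
      rw [IsSymm, transpose_mul, transpose_mul, transpose_transpose, hS.eq, Matrix.mul_assoc])
    refine ⟨X, ⟨hX, fun x => ?_, F, hXe⟩, hXe⟩
    have := hcomp F X 0 hF hXe (fun x => by
      by_cases hx : x = 0
      · simp [hx]
      · simpa [areLyap] using (hM F x hx).le) x
    simpa using this
  have hstep : ∀ P : {P // Good P}, ∃ X : {P // Good P}, areLyap A B C D S (κ P) X = 0 ∧
      ∀ x, x ⬝ᵥ X.1 *ᵥ x ≤ x ⬝ᵥ P.1 *ᵥ x := by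
    rintro ⟨P, hP, h0, F, hF⟩
    have hle : ∀ x, x ⬝ᵥ (areLyap A B C D S (κ P) P) *ᵥ x ≤ 0 := by
      intro x
      have h1 := hid P hP F
      rw [hF] at h1
      have h2 := congrArg (fun M => x ⬝ᵥ M *ᵥ x) h1
      simp only [add_mulVec, dotProduct_add, zero_mulVec, dotProduct_zero] at h2
      rw [hidK P hP]
      linarith [hW (F - κ P) x]
    have hH := hposs (κ P) P hP h0 hle (hpd F P hP h0 hF)
    obtain ⟨X, hX, hXe⟩ := hsolve (κ P) hH
    refine ⟨⟨X, hX⟩, hXe, fun x => ?_⟩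
    have := are_lyap_nonneg (A - B * κ P) (P - X) hH (by
      intro y
      have e : (P - X) * (A - B * κ P) + (A - B * κ P)ᵀ * (P - X)
          = areLyap A B C D S (κ P) P - areLyap A B C D S (κ P) X := by
        simp only [areLyap, Matrix.mul_sub (A - B * κ P)ᵀ, Matrix.sub_mul P X]; abel
      rw [e, hXe, sub_zero]
      exact hle y) x
    rw [sub_mulVec, dotProduct_sub] at this
    exact sub_nonneg.1 this
  obtain ⟨X₀, hX₀, -⟩ := hsolve F₀ hF₀
  choose nxt hn1 hn2 using hstep
  let sq : ℕ → {P // Good P} := fun i => nxt^[i] ⟨X₀, hX₀⟩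
  have hsq : ∀ i, sq (i + 1) = nxt (sq i) := fun i => Function.iterate_succ_apply' _ _ _
  have hanti : ∀ x, Antitone fun i => x ⬝ᵥ (sq i).1 *ᵥ x := fun x =>
    antitone_nat_of_succ_le fun i => by rw [hsq]; exact hn2 _ x
  have hconv : ∀ x, ∃ g, Tendsto (fun i => x ⬝ᵥ (sq i).1 *ᵥ x) atTop (𝓝 g) := fun x =>
    ⟨_, tendsto_atTop_ciInf (hanti x) ⟨0, by rintro _ ⟨i, rfl⟩; exact (sq i).2.2.1 x⟩⟩
  choose g hg using hconv
  have hpol : ∀ P : Matrix (Fin l) (Fin l) ℝ, P.IsSymm → ∀ i j, P i j =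
      ((Pi.single i 1 + Pi.single j 1) ⬝ᵥ P *ᵥ (Pi.single i 1 + Pi.single j 1)
        - Pi.single i 1 ⬝ᵥ P *ᵥ Pi.single i 1 - Pi.single j 1 ⬝ᵥ P *ᵥ Pi.single j 1) / 2 := by
    intro P hP i j
    simp [mulVec_add, add_dotProduct, dotProduct_add]
    have := hP.apply i j
    linarith
  let P : Matrix (Fin l) (Fin l) ℝ := Matrix.of fun i j =>
    (g (Pi.single i 1 + Pi.single j 1) - g (Pi.single i 1) - g (Pi.single j 1)) / 2
  have hlim : Tendsto (fun i => (sq i).1) atTop (𝓝 P) := by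
    refine tendsto_pi_nhds.2 fun i => tendsto_pi_nhds.2 fun j => ?_
    have := (((hg (Pi.single i 1 + Pi.single j 1)).sub (hg (Pi.single i 1))).sub
      (hg (Pi.single j 1))).div_const 2
    refine this.congr fun m => ?_
    exact (hpol _ (sq m).2.1 i j).symm
  have hPs : P.IsSymm := by
    have h1 : Tendsto (fun i => (sq i).1ᵀ) atTop (𝓝 Pᵀ) :=
      ((continuous_id.matrix_transpose).tendsto P).comp hlim
    refine tendsto_nhds_unique (h1.congr fun i => (sq i).2.1) hlim
  have hP0 : ∀ x, 0 ≤ x ⬝ᵥ P *ᵥ x := by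
    intro x
    have hc : Continuous fun M : Matrix (Fin l) (Fin l) ℝ => x ⬝ᵥ M *ᵥ x := by fun_prop
    exact ge_of_tendsto' ((hc.tendsto P).comp hlim) fun i => (sq i).2.2.1 x
  have hPL : areLyap A B C D S (κ P) P = 0 := by
    have hc : Continuous fun M : Matrix (Fin l) (Fin l) ℝ × Matrix (Fin l) (Fin l) ℝ =>
        areLyap A B C D S (κ M.1) M.2 := by
      simp only [areLyap, hκ]; fun_prop
    have h1 := (hc.tendsto (P, P)).comp (hlim.prodMk_nhds (hlim.comp (tendsto_add_atTop_nat 1)))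
    refine tendsto_nhds_unique h1 (tendsto_const_nhds.congr fun i => ?_)
    simp only [Function.comp_apply, hsq]
    exact (hn1 _).symm
  have hPp := hpd _ P hPs hP0 hPL
  have hPric : ric P = 0 := by rw [← hidK P hPs]; exact hPL
  have hHur : ∀ P, P.IsSymm → (∀ x ≠ 0, 0 < x ⬝ᵥ P *ᵥ x) → ric P = 0 →
      IsHurwitz (A - B * κ P) := by
    intro P hP hpos hr
    refine hposs (κ P) P hP ?_ ?_ hpos
    · intro x
      by_cases hx : x = 0
      · simp [hx]
      · exact (hpos x hx).le
    · intro x; rw [hidK P hP, hr]; simp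
  have hle : ∀ P P', P.IsSymm → P'.IsSymm → (∀ x ≠ 0, 0 < x ⬝ᵥ P *ᵥ x) → ric P = 0 →
      ric P' = 0 → ∀ x, x ⬝ᵥ P' *ᵥ x ≤ x ⬝ᵥ P *ᵥ x := by
    intro P P' hP hP' hpos hr hr'
    refine hcomp (κ P) P P' (hHur P hP hpos hr) (by rw [hidK P hP, hr]) (fun x => ?_)
    rw [hid P' hP', hr', zero_add]
    exact hW _ x
  refine ⟨P, ⟨hPs, hPp, hPric, hHur P hPs hPp hPric⟩, fun P' hP' hpos' hr' => ?_⟩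
  have heq : ∀ x, x ⬝ᵥ P' *ᵥ x = x ⬝ᵥ P *ᵥ x := fun x => le_antisymm
    (hle P P' hPs hP' hPp hPric hr' x) (hle P' P hP' hPs hpos' hr' hPric x)
  ext i j
  rw [hpol P' hP', hpol P hPs, heq, heq, heq]

end main

theorem are_eq_zero_of_rank {a : Type*} [Fintype a] {l : ℕ} (M : Matrix a (Fin l) ℝ)
    (h : M.rank = l) (x : Fin l → ℝ) (hx : M *ᵥ x = 0) : x = 0 := by
  have h1 := LinearMap.finrank_range_add_finrank_ker M.mulVecLin
  rw [Matrix.rank] at h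
  rw [h, Module.finrank_fin_fun] at h1
  have h2 : LinearMap.ker M.mulVecLin = ⊥ := Submodule.finrank_eq_zero.1 (by omega)
  have : x ∈ LinearMap.ker M.mulVecLin := by simpa using hx
  rw [h2] at this
  simpa using this

/-- Lemma (ARE solvability): for a stabilizable ODE-LTI associated with the DAE (so
`(A_g, B_g)` stabilizable, `D_g` of full column rank or zero with `B_g = 0`, `E D̂_s = 0`
and `E Ĉ_s` injective), with `Q > 0`, `R > 0` symmetric and `S = diag(Q, R)`, the ARE
has a unique symmetric positive definite solution `P`, and `A_g − B_g K` is Hurwitz. -/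
theorem are_unique_posdef_solution {c n m l k : ℕ}
    (E : Matrix (Fin c) (Fin n) ℝ)
    (Ag : Matrix (Fin l) (Fin l) ℝ) (Bg : Matrix (Fin l) (Fin k) ℝ)
    (Cg : Matrix (Fin n ⊕ Fin m) (Fin l) ℝ) (Dg : Matrix (Fin n ⊕ Fin m) (Fin k) ℝ)
    (Q : Matrix (Fin n) (Fin n) ℝ) (R : Matrix (Fin m) (Fin m) ℝ)
    (hQsym : Q.IsSymm) (hRsym : R.IsSymm) (hQ : Q.PosDef) (hR : R.PosDef)
    (hstab : ∃ F : Matrix (Fin k) (Fin l) ℝ, IsHurwitz (Ag + Bg * F))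
    (hDrank : Dg.rank = k ∨ (Dg = 0 ∧ Bg = 0 ∧ k = 1))
    (hEDs : E * (Matrix.of fun i j => Dg (Sum.inl i) j) = 0)
    (hECs : (E * (Matrix.of fun i j => Cg (Sum.inl i) j)).rank = l) :
    ∃ P : Matrix (Fin l) (Fin l) ℝ,
      (P.IsSymm ∧ P.PosDef ∧ SatisfiesARE Ag Bg Cg Dg (Matrix.fromBlocks Q 0 0 R) P ∧
        IsHurwitz (Ag - Bg * riccatiGain Bg Cg Dg (Matrix.fromBlocks Q 0 0 R) P)) ∧
      ∀ P' : Matrix (Fin l) (Fin l) ℝ,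
        P'.IsSymm → P'.PosDef → SatisfiesARE Ag Bg Cg Dg (Matrix.fromBlocks Q 0 0 R) P' →
        P' = P := by
  classical
  set S := Matrix.fromBlocks Q 0 0 R with hSdef
  have hS : S.IsSymm := by
    rw [hSdef, IsSymm, fromBlocks_transpose, hQsym.eq, hRsym.eq]; simp
  have hSq : ∀ x, x ⬝ᵥ S *ᵥ x = (x ∘ Sum.inl) ⬝ᵥ Q *ᵥ (x ∘ Sum.inl)
      + (x ∘ Sum.inr) ⬝ᵥ R *ᵥ (x ∘ Sum.inr) := by
    intro x
    rw [hSdef, fromBlocks_mulVec]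
    simp [dotProduct, Fintype.sum_sum_type]
  have hQ0 : ∀ x, 0 ≤ x ⬝ᵥ Q *ᵥ x := fun x => by
    simpa using hQ.posSemidef.dotProduct_mulVec_nonneg x
  have hR0 : ∀ x, 0 ≤ x ⬝ᵥ R *ᵥ x := fun x => by
    simpa using hR.posSemidef.dotProduct_mulVec_nonneg x
  have hS0 : ∀ x, 0 ≤ x ⬝ᵥ S *ᵥ x := fun x => by
    rw [hSq]; exact add_nonneg (hQ0 _) (hR0 _)
  have hSp : ∀ x ≠ 0, 0 < x ⬝ᵥ S *ᵥ x := by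
    intro x hx
    rw [hSq]
    have : x ∘ Sum.inl ≠ 0 ∨ x ∘ Sum.inr ≠ 0 := by
      by_contra! h
      apply hx
      ext i
      rcases i with i | i
      · exact congrFun h.1 i
      · exact congrFun h.2 i
    rcases this with h | h
    · have := hQ.dotProduct_mulVec_pos h
      rw [star_trivial] at this
      linarith [hR0 (x ∘ Sum.inr)]
    · have := hR.dotProduct_mulVec_pos h
      rw [star_trivial] at this
      linarith [hQ0 (x ∘ Sum.inl)]
  have hquad : ∀ {b : ℕ} (G : Matrix (Fin n ⊕ Fin m) (Fin b) ℝ) (x : Fin b → ℝ),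
      x ⬝ᵥ (Gᵀ * S * G) *ᵥ x = (G *ᵥ x) ⬝ᵥ S *ᵥ (G *ᵥ x) := by
    intro b G x
    simp only [← mulVec_mulVec, are_dot_transpose]
    rw [dotProduct_comm]
  let V : Matrix (Fin k) (Fin k) ℝ := if Dg = 0 then 0 else (Dgᵀ * S * Dg)⁻¹
  have hgain : ∀ P, riccatiGain Bg Cg Dg S P = V * (Bgᵀ * P + Dgᵀ * S * Cg) := by
    intro P
    by_cases h : Dg = 0 <;> simp [riccatiGain, V, h]
  have hV : ∀ P : Matrix (Fin l) (Fin l) ℝ,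
      (Dgᵀ * S * Dg) * (V * (Bgᵀ * P + Dgᵀ * S * Cg)) = Bgᵀ * P + Dgᵀ * S * Cg := by
    intro P
    by_cases h : Dg = 0
    · rcases hDrank with h1 | ⟨-, h2, -⟩
      · rw [h, rank_zero] at h1
        subst h1
        exact Subsingleton.elim _ _
      · simp [h, h2]
    · have hr : Dg.rank = k := hDrank.resolve_right fun h' => h h'.1
      have hdet : IsUnit (Dgᵀ * S * Dg).det := by
        rw [isUnit_iff_ne_zero]
        intro h0
        obtain ⟨v, hv0, hv⟩ := Matrix.exists_mulVec_eq_zero_iff.2 h0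
        apply hv0
        apply are_eq_zero_of_rank Dg hr
        by_contra hne
        have h3 := hSp _ hne
        rw [← hquad, hv, dotProduct_zero] at h3
        exact lt_irrefl _ h3
      simp only [V, h, if_false]
      rw [← Matrix.mul_assoc, Matrix.mul_nonsing_inv _ hdet, Matrix.one_mul]
  have hM : ∀ F : Matrix (Fin k) (Fin l) ℝ, ∀ x ≠ 0,
      0 < x ⬝ᵥ ((Cg - Dg * F)ᵀ * S * (Cg - Dg * F)) *ᵥ x := by
    intro F x hx
    rw [hquad]
    apply hSp
    intro h0
    apply hx
    apply are_eq_zero_of_rank _ hECs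
    have h1 : (Matrix.of fun i j => Cg (Sum.inl i) j) *ᵥ x
        = (Matrix.of fun i j => Dg (Sum.inl i) j) *ᵥ (F *ᵥ x) := by
      rw [sub_mulVec, sub_eq_zero, ← mulVec_mulVec] at h0
      ext i
      exact congrFun h0 (Sum.inl i)
    rw [← mulVec_mulVec, h1, mulVec_mulVec, hEDs, zero_mulVec]
  obtain ⟨F, hF⟩ := hstab
  obtain ⟨P, ⟨hPs, hPp, hPr, hPH⟩, hu⟩ := are_abstract Ag Bg Cg Dg S hS hS0 V hV hM (-F)
    (by rw [Matrix.mul_neg, sub_neg_eq_add]; exact hF)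
  refine ⟨P, ⟨hPs, ?_, ?_, ?_⟩, ?_⟩
  · refine PosDef.of_dotProduct_mulVec_pos ?_ fun x hx => ?_
    · rw [IsHermitian, conjTranspose_eq_transpose_of_trivial]; exact hPs
    · rw [star_trivial]; exact hPp x hx
  · rw [SatisfiesARE, hgain]; exact hPr.symm
  · rw [hgain]; exact hPH
  · intro P' hs hp hr
    rw [SatisfiesARE, hgain] at hr
    refine hu P' hs (fun x hx => ?_) hr.symm
    have := hp.dotProduct_mulVec_pos hx
    rwa [star_trivial] at this
end
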